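/- arXiv:math-ph/0601020 — 2 statements merged into one kernel-verified Lean document; each statement's English description precedes it below -/
import Mathlib

section
/- Suppose in addition that Γ_k(t) = O(t) and Γ̃_k(t) = O(t) for all k ∈ ℤ with k ≠ n+1, that Γ_{n−1}(t) = O(t²), and that Γ_{n+1}(t) = O(t). Then Γ_k(t) = 0 = Γ̃_k(t), as formal Laurent series in t, for all k ∈ ℤ. -/
/-!
Common definitions: the matrices `L₁`, `L₂` of the Toeplitz lattice, their powers,
the recursion polynomials `Γ_k` (here `GamA`), `Γ̃_k` (here `GamB`) and their
self-dual version (`GamSD`), together with the notion of formal Laurent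
solutions of the (self-dual) Toeplitz lattice.
-/

noncomputable section

namespace SingConf

variable {A : Type*} [CommRing A]

/-- The entry `(L₁)_{ij} = -x_i y_{j-1} + δ_{i+1,j}` (for `j - i ≤ 1`, zero otherwise). -/
def L1e (x y : ℤ → A) (i j : ℤ) : A :=
  if j ≤ i + 1 then -(x i * y (j - 1)) + (if i + 1 = j then 1 else 0) else 0

/-- The entry `(L₂)_{ij} = -y_j x_{i-1} + δ_{j+1,i}` (for `j - i ≥ -1`, zero otherwise). -/
def L2e (x y : ℤ → A) (i j : ℤ) : A :=
  if i ≤ j + 1 then -(y j * x (i - 1)) + (if j + 1 = i then 1 else 0) else 0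

/-- The entry `(L₁^s)_{ij}`; the matrix `L₁` has upper bandwidth 1, so each entry of a
power is a finite sum. -/
def L1pow (x y : ℤ → A) : ℕ → ℤ → ℤ → A
  | 0 => fun i j => if i = j then 1 else 0
  | s + 1 => fun i j => ∑ l ∈ Finset.Icc (j - 1) (i + (s : ℤ)), L1pow x y s i l * L1e x y l j

/-- The entry `(L₂^s)_{ij}`. -/
def L2pow (x y : ℤ → A) : ℕ → ℤ → ℤ → A
  | 0 => fun i j => if i = j then 1 else 0
  | s + 1 => fun i j => ∑ l ∈ Finset.Icc (i - (s : ℤ)) (j + 1), L2pow x y s i l * L2e x y l j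

/-- The recursion polynomial
`Γ_k(x,y;u) = (v_k/y_k)(-(L₁P₁'(L₁))_{k+1,k+1} - (L₂P₂'(L₂))_{k,k}
              + (P₁'(L₁))_{k+1,k} + (P₂'(L₂))_{k,k+1}) + k x_k`
where `P₁(λ) = ∑_{i=1}^N u_i λ^i/i`, `P₂(λ) = ∑_{i=1}^N u_{-i} λ^i/i`, `v_k = 1 - x_k y_k`.
The apparent denominator `y_k` cancels, thanks to the identities
`(L₁^{i-1})_{k+1,k} - (L₁^i)_{k+1,k+1} = y_k ∑_{l} x_l (L₁^{i-1})_{k+1,l}` and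
`(L₂^{i-1})_{k,k+1} - (L₂^i)_{k,k} = y_k ∑_{l} x_{l-1} (L₂^{i-1})_{k,l}`,
which is how the cancellation-free expression below is obtained. -/
def GamA (N : ℕ) (u : ℤ → A) (x y : ℤ → A) (k : ℤ) : A :=
  (1 - x k * y k) *
    ((∑ i ∈ Finset.Icc 1 N, u (i : ℤ) *
        ∑ l ∈ Finset.Icc k (k + (i : ℤ)), x l * L1pow x y (i - 1) (k + 1) l) +
      ∑ i ∈ Finset.Icc 1 N, u (-(i : ℤ)) *
        ∑ l ∈ Finset.Icc (k - (i : ℤ) + 1) (k + 1), x (l - 1) * L2pow x y (i - 1) k l) +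
  (k : A) * x k

/-- The recursion polynomial
`Γ̃_k(x,y;u) = (v_k/x_k)(-(L₁P₁'(L₁))_{k,k} - (L₂P₂'(L₂))_{k+1,k+1}
              + (P₁'(L₁))_{k+1,k} + (P₂'(L₂))_{k,k+1}) + k y_k`,
written in cancellation-free form using
`(L₁^{i-1})_{k+1,k} - (L₁^i)_{k,k} = x_k ∑_{l} y_{l-1} (L₁^{i-1})_{l,k}` and
`(L₂^{i-1})_{k,k+1} - (L₂^i)_{k+1,k+1} = x_k ∑_{l} y_l (L₂^{i-1})_{l,k+1}`. -/
def GamB (N : ℕ) (u : ℤ → A) (x y : ℤ → A) (k : ℤ) : A :=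
  (1 - x k * y k) *
    ((∑ i ∈ Finset.Icc 1 N, u (i : ℤ) *
        ∑ l ∈ Finset.Icc (k - (i : ℤ) + 1) (k + 1), y (l - 1) * L1pow x y (i - 1) l k) +
      ∑ i ∈ Finset.Icc 1 N, u (-(i : ℤ)) *
        ∑ l ∈ Finset.Icc k (k + (i : ℤ)), y l * L2pow x y (i - 1) l (k + 1)) +
  (k : A) * y k

/-- The self-dual recursion polynomial
`Γ_k(x;u) = (v_k/x_k)(2(P'(L))_{k+1,k} - (LP'(L))_{k+1,k+1} - (LP'(L))_{k,k}) + k x_k`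
(where `L = L₁` with `y = x`, `v_k = 1 - x_k²`), in cancellation-free form. -/
def GamSD (N : ℕ) (u : ℕ → A) (x : ℤ → A) (k : ℤ) : A :=
  (1 - x k * x k) *
    (∑ i ∈ Finset.Icc 1 N, u i *
      ((∑ l ∈ Finset.Icc k (k + (i : ℤ)), x l * L1pow x x (i - 1) (k + 1) l) +
        ∑ l ∈ Finset.Icc (k - (i : ℤ) + 1) (k + 1), x (l - 1) * L1pow x x (i - 1) l k)) +
  (k : A) * x k

variable {K : Type*} [Field K]

/-- `f(t) = O(t^m)` for a formal Laurent series. -/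
def BigO (f : LaurentSeries K) (m : ℤ) : Prop := ∀ i < m, f.coeff i = 0

/-- A family `x(t) = (x_k(t))_{k ∈ ℤ}` of formal Laurent series is a solution of the first
vector field of the self-dual Toeplitz lattice: `dx_k/dt = (1 - x_k²)(x_{k+1} - x_{k-1})`;
stated coefficientwise (the coefficient of `t^m` in `dx_k/dt` is `(m+1)·x_k^{(m+1)}`). -/
def IsSolSD (x : ℤ → LaurentSeries K) : Prop :=
  ∀ k m : ℤ, ((m + 1 : ℤ) : K) * (x k).coeff (m + 1) =
    ((1 - x k * x k) * (x (k + 1) - x (k - 1))).coeff m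

/-- A family `(x_k(t), y_k(t))_{k ∈ ℤ}` of formal Laurent series is a solution of the first
Toeplitz vector field: `dx_k/dt = (1 - x_k y_k)(x_{k+1} - x_{k-1})`,
`dy_k/dt = (1 - x_k y_k)(y_{k+1} - y_{k-1})`. -/
def IsSolT (x y : ℤ → LaurentSeries K) : Prop :=
  ∀ k m : ℤ,
    ((m + 1 : ℤ) : K) * (x k).coeff (m + 1) =
      ((1 - x k * y k) * (x (k + 1) - x (k - 1))).coeff m ∧
    ((m + 1 : ℤ) : K) * (y k).coeff (m + 1) =
      ((1 - x k * y k) * (y (k + 1) - y (k - 1))).coeff m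

end SingConf

open SingConf

variable (F : Type*) [Field F] [CharZero F] (n : ℤ) (N : ℕ)

/-!
Write `v_k = 1 - x_k y_k`. With a tridiagonal matrix `B` the Toeplitz flow reads `x' = B x`,
`L₁' = [B, L₁]`, so every sum occurring in `Γ_k` and `Γ̃_k` is differentiated by moving `B` across
a matrix product, at the cost of a boundary term. Since `u_{±1}' = 1`, this shows that `(Γ, -Γ̃)`
solves the linearisation of the flow along `(x, y)`, where the equation at site `k` involves `v_k`
times differences of the neighbouring sites and a term in `Γ_k`, `Γ̃_k` only.

In leading order `t^m` the site `k` therefore satisfies a `2 × 2` linear system, which is singular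
only for `m = 0` and at a resonance: `m = 1` at the sites `n ± 1` and `m = -2` at the pole site
`n`. The assumed orders lie beyond all resonances, except at the sites `n ± 1`, where the simple
pole of `x_n - x_{n-2}` and the double pole of `v_n` carry `Γ_{n-1} = O(t²)` over to `Γ̃_{n-1}`,
`Γ_{n+1}` and `Γ̃_{n+1}`. From there on the orders of vanishing increase at all sites
simultaneously and without bound.
-/

namespace SingConf

section ToeplitzMatrix

variable {A : Type*} [CommRing A]

lemma sum_Icc_sub_succ (f : ℤ → A) {a b : ℤ} (hab : a ≤ b + 1) :
    ∑ l ∈ Finset.Icc a b, (f l - f (l + 1)) = f a - f (b + 1) := by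
  obtain ⟨b, rfl⟩ : ∃ c, b = c - 1 := ⟨b + 1, by ring⟩
  rw [sub_add_cancel] at hab ⊢
  induction b, hab using Int.leInduction with
  | base => simp
  | succ b hb ih =>
    rw [add_sub_cancel_right, ← Finset.insert_Icc_sub_one_right_eq_Icc hb,
      Finset.sum_insert (by simp), ih]
    ring

lemma L1e_eq_zero (x y : ℤ → A) {i j : ℤ} (h : i + 1 < j) : L1e x y i j = 0 :=
  if_neg (by omega)

lemma L1e_of_le (x y : ℤ → A) {i j : ℤ} (h : j ≤ i + 1) :
    L1e x y i j = (if j = i + 1 then 1 else 0) - x i * y (j - 1) := by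
  rw [L1e, if_pos h, neg_add_eq_sub]
  simp only [eq_comm]

lemma L1pow_eq_zero (x y : ℤ → A) (s : ℕ) {i j : ℤ} (h : i + s < j) : L1pow x y s i j = 0 := by
  cases s with
  | zero => exact if_neg (by omega)
  | succ s =>
    simp only [L1pow]
    rw [Finset.Icc_eq_empty (by push_cast at h; omega), Finset.sum_empty]

lemma L1pow_succ (x y : ℤ → A) (s : ℕ) {i j a b : ℤ} (ha : a ≤ j - 1) (hb : i + s ≤ b) :
    L1pow x y (s + 1) i j = ∑ l ∈ Finset.Icc a b, L1pow x y s i l * L1e x y l j := by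
  refine Finset.sum_subset (Finset.Icc_subset_Icc ha hb) fun l _ hl ↦ ?_
  rw [Finset.mem_Icc, not_and_or, not_le, not_le] at hl
  rcases hl with hl | hl
  · rw [L1e_eq_zero x y (by omega), mul_zero]
  · rw [L1pow_eq_zero x y s hl, zero_mul]

lemma L1pow_one (x y : ℤ → A) (i j : ℤ) : L1pow x y 1 i j = L1e x y i j := by
  rw [L1pow_succ x y 0 (min_le_left (j - 1) i) (b := i) (by simp)]
  simp [L1pow]

lemma L1pow_succ' (x y : ℤ → A) (s : ℕ) {i j a b : ℤ} (ha : a ≤ j - s) (hb : i + 1 ≤ b) :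
    L1pow x y (s + 1) i j = ∑ l ∈ Finset.Icc a b, L1e x y i l * L1pow x y s l j := by
  induction s generalizing j with
  | zero =>
    rw [L1pow_one]
    simp only [L1pow, mul_ite, mul_one, mul_zero, Finset.sum_ite_eq', Finset.mem_Icc]
    split_ifs with hj
    · rfl
    · exact L1e_eq_zero x y (by push_cast at ha; omega)
  | succ s ih =>
    push_cast at ha
    have hrow : ∀ l ∈ Finset.Icc (j - 1) (b + s), L1pow x y (s + 1) i l * L1e x y l j =
        ∑ m ∈ Finset.Icc a b, L1e x y i m * (L1pow x y s m l * L1e x y l j) := fun l hl ↦ by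
      rw [ih (by rw [Finset.mem_Icc] at hl; omega), Finset.sum_mul]
      simp only [mul_assoc]
    rw [L1pow_succ x y (s + 1) le_rfl (b := b + s) (by push_cast; omega),
      Finset.sum_congr rfl hrow, Finset.sum_comm]
    refine Finset.sum_congr rfl fun m hm ↦ ?_
    rw [Finset.mem_Icc] at hm
    rw [← Finset.mul_sum, ← L1pow_succ x y s le_rfl (by omega)]

lemma L2e_eq_L1e (x y : ℤ → A) (i j : ℤ) : L2e x y i j = L1e y x j i := rfl

lemma L2pow_eq_L1pow (x y : ℤ → A) (s : ℕ) (i j : ℤ) : L2pow x y s i j = L1pow y x s j i := by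
  induction s generalizing j with
  | zero => simp only [L1pow, L2pow, eq_comm]
  | succ s ih =>
    rw [L1pow_succ' y x s le_rfl le_rfl, L2pow]
    simp only [ih, L2e_eq_L1e, mul_comm]

/-- The truncated entry `∑_{l ≥ j} x_l (L₁^s)_{il}` of the formally infinite vector `L₁^s x`. -/
def rowTail (x y : ℤ → A) (s : ℕ) (i j : ℤ) : A :=
  ∑ l ∈ Finset.Icc j (i + s), x l * L1pow x y s i l

/-- The truncated entry `∑_{l ≤ i} y_{l-1} (L₁^s)_{lj}` of the formally infinite covector
`(y_{l-1})_l L₁^s`. -/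
def colHead (x y : ℤ → A) (s : ℕ) (i j : ℤ) : A :=
  ∑ l ∈ Finset.Icc (j - s) i, y (l - 1) * L1pow x y s l j

lemma rowTail_eq_sum (x y : ℤ → A) (s : ℕ) {i j b : ℤ} (hb : i + s ≤ b) :
    rowTail x y s i j = ∑ l ∈ Finset.Icc j b, x l * L1pow x y s i l := by
  refine Finset.sum_subset (Finset.Icc_subset_Icc_right hb) fun l hl hl' ↦ ?_
  rw [Finset.mem_Icc] at hl hl'
  rw [L1pow_eq_zero x y s (by omega), mul_zero]

lemma colHead_eq_sum (x y : ℤ → A) (s : ℕ) {i j a : ℤ} (ha : a ≤ j - s) :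
    colHead x y s i j = ∑ l ∈ Finset.Icc a i, y (l - 1) * L1pow x y s l j := by
  refine Finset.sum_subset (Finset.Icc_subset_Icc_left ha) fun l hl hl' ↦ ?_
  rw [Finset.mem_Icc] at hl hl'
  rw [L1pow_eq_zero x y s (by omega), mul_zero]

lemma rowTail_eq_add (x y : ℤ → A) (s : ℕ) (i j : ℤ) :
    rowTail x y s i j = x j * L1pow x y s i j + rowTail x y s i (j + 1) := by
  have hb := le_max_right j (i + s)
  rw [rowTail_eq_sum x y s hb, rowTail_eq_sum x y s hb,
    ← Finset.insert_Icc_add_one_left_eq_Icc (le_max_left j (i + s)), Finset.sum_insert (by simp)]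

lemma colHead_succ (x y : ℤ → A) (s : ℕ) (i j : ℤ) :
    colHead x y s (i + 1) j = colHead x y s i j + y i * L1pow x y s (i + 1) j := by
  have ha := min_le_right (i + 1) (j - s)
  rw [colHead_eq_sum x y s ha, colHead_eq_sum x y s ha,
    ← Finset.insert_Icc_right_eq_Icc_add_one (min_le_left (i + 1) (j - s)),
    Finset.sum_insert (by simp), add_sub_cancel_right, add_comm]

lemma mul_rowTail (x y : ℤ → A) (s : ℕ) (i j : ℤ) :
    y j * rowTail x y s i j = L1pow x y s i j - L1pow x y (s + 1) i (j + 1) := by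
  have hb := le_max_right j (i + s)
  have hL : ∀ l ∈ Finset.Icc j (max j (i + s)), L1pow x y s i l * L1e x y l (j + 1) =
      (if j = l then L1pow x y s i l else 0) - y j * (x l * L1pow x y s i l) := fun l hl ↦ by
    rw [L1e_of_le x y (by rw [Finset.mem_Icc] at hl; omega), add_sub_cancel_right]
    simp only [add_left_inj]
    split_ifs <;> ring
  rw [rowTail_eq_sum x y s hb, L1pow_succ x y s (a := j) (by omega) hb, Finset.sum_congr rfl hL,
    Finset.sum_sub_distrib, Finset.sum_ite_eq, if_pos (by simp), Finset.mul_sum]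
  ring

lemma mul_colHead (x y : ℤ → A) (s : ℕ) (i j : ℤ) :
    x i * colHead x y s (i + 1) j = L1pow x y s (i + 1) j - L1pow x y (s + 1) i j := by
  have ha := min_le_right (i + 1) (j - s)
  have hL : ∀ l ∈ Finset.Icc (min (i + 1) (j - s)) (i + 1), L1e x y i l * L1pow x y s l j =
      (if l = i + 1 then L1pow x y s l j else 0) - x i * (y (l - 1) * L1pow x y s l j) :=
    fun l hl ↦ by
      rw [L1e_of_le x y (Finset.mem_Icc.1 hl).2]
      split_ifs <;> ring
  rw [colHead_eq_sum x y s ha, L1pow_succ' x y s ha le_rfl, Finset.sum_congr rfl hL,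
    Finset.sum_sub_distrib, Finset.sum_ite_eq', if_pos (by simp), Finset.mul_sum]
  ring

lemma mul_rowTail_succ (x y : ℤ → A) (s : ℕ) (i j : ℤ) :
    y j * rowTail x y s i (j + 1) =
      (1 - x j * y j) * L1pow x y s i j - L1pow x y (s + 1) i (j + 1) := by
  linear_combination mul_rowTail x y s i j - y j * rowTail_eq_add x y s i j

lemma mul_colHead_self (x y : ℤ → A) (s : ℕ) (i j : ℤ) :
    x i * colHead x y s i j =
      (1 - x i * y i) * L1pow x y s (i + 1) j - L1pow x y (s + 1) i j := by
  linear_combination mul_colHead x y s i j - x i * colHead_succ x y s i j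

lemma rowTail_zero (x y : ℤ → A) (k : ℤ) : rowTail x y 0 (k + 1) k = x (k + 1) := by
  simp [rowTail, L1pow]

lemma colHead_zero (x y : ℤ → A) (k : ℤ) : colHead x y 0 (k + 1) k = y (k - 1) := by
  simp [colHead, L1pow]

end ToeplitzMatrix

section LaxPair

variable {A : Type*} [CommRing A]

/-- Derivations of a commutative ring, that is, over `ℤ`. Fixing the algebra structure for an
abstract ring keeps it canonical: on `LaurentSeries K`, instance search finds
`HahnSeries.powerSeriesAlgebra` instead. -/
abbrev IntDerivation (A : Type*) [CommRing A] : Type _ := Derivation ℤ A A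

/-- An additive map satisfying the Leibniz rule, as a derivation. -/
def IntDerivation.ofLeibniz (d : A →+ A) (hd : ∀ a b, d (a * b) = a * d b + b * d a) :
    IntDerivation A :=
  Derivation.mk' d.toIntLinearMap hd

/-- The symmetric difference `f_{k+1} - f_{k-1}`. -/
def centralDiff (f : ℤ → A) (k : ℤ) : A := f (k + 1) - f (k - 1)

/-- The sequences `x`, `y` evolve under the derivation `D` by the first Toeplitz vector field. -/
structure IsToeplitzFlow (D : IntDerivation A) (x y : ℤ → A) : Prop where
  deriv_fst : ∀ k, D (x k) = (1 - x k * y k) * centralDiff x k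
  deriv_snd : ∀ k, D (y k) = (1 - x k * y k) * centralDiff y k

lemma IsToeplitzFlow.symm {D : IntDerivation A} {x y : ℤ → A} (h : IsToeplitzFlow D x y) :
    IsToeplitzFlow D y x where
  deriv_fst k := by rw [h.deriv_snd, mul_comm (x k)]
  deriv_snd k := by rw [h.deriv_fst, mul_comm (x k)]

/-- The product `(B c)_i` of a column vector `c` with the tridiagonal Lax matrix `B`, whose nonzero
entries are `B_{i,i+1} = 1 - x_i y_i`, `B_{i,i} = x_{i-1} y_i` and `B_{i,i-1} = -1`. -/
def laxMul (x y c : ℤ → A) (i : ℤ) : A :=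
  (1 - x i * y i) * c (i + 1) + x (i - 1) * y i * c i - c (i - 1)

/-- The product `(r B)_j` of a row vector `r` with the tridiagonal Lax matrix `B`. -/
def mulLax (x y r : ℤ → A) (j : ℤ) : A :=
  r (j - 1) * (1 - x (j - 1) * y (j - 1)) + r j * (x (j - 1) * y j) - r (j + 1)

/-- The boundary term at `l | l + 1` produced by moving the Lax matrix from one factor of the
pairing `∑ r_l c_l` to the other. -/
def laxFlux (x y r c : ℤ → A) (l : ℤ) : A :=
  r l * (1 - x l * y l) * c (l + 1) + r (l + 1) * c l

/-- The Lax equation `D M = [B, M]`. -/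
def IsLax (D : IntDerivation A) (x y : ℤ → A) (M : ℤ → ℤ → A) : Prop :=
  ∀ i j, D (M i j) = laxMul x y (M · j) i - mulLax x y (M i) j

variable {D : IntDerivation A} {x y : ℤ → A}

lemma laxMul_congr {c c' : ℤ → A} {i : ℤ} (h : ∀ l ≤ i + 1, c l = c' l) :
    laxMul x y c i = laxMul x y c' i := by
  rw [laxMul, laxMul, h _ le_rfl, h i (by omega), h (i - 1) (by omega)]

lemma mulLax_congr {r r' : ℤ → A} {j : ℤ} (h : ∀ l ≥ j - 1, r l = r' l) :
    mulLax x y r j = mulLax x y r' j := by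
  rw [mulLax, mulLax, h _ le_rfl, h j (by omega), h (j + 1) (by omega)]

lemma laxFlux_eq_zero_of_left {r c : ℤ → A} {l : ℤ} (hr : r l = 0) (hr' : r (l + 1) = 0) :
    laxFlux x y r c l = 0 := by
  simp [laxFlux, hr, hr']

lemma laxFlux_eq_zero_of_right {r c : ℤ → A} {l : ℤ} (hc : c l = 0) (hc' : c (l + 1) = 0) :
    laxFlux x y r c l = 0 := by
  simp [laxFlux, hc, hc']

lemma laxMul_sum (x y : ℤ → A) (P : ℤ → ℤ → A) (c : ℤ → A) (S : Finset ℤ) (i : ℤ) :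
    laxMul x y (fun i ↦ ∑ l ∈ S, P i l * c l) i = ∑ l ∈ S, laxMul x y (P · l) i * c l := by
  simp only [laxMul, Finset.mul_sum, ← Finset.sum_add_distrib, ← Finset.sum_sub_distrib]
  exact Finset.sum_congr rfl fun l _ ↦ by ring

lemma mulLax_sum (x y : ℤ → A) (r : ℤ → A) (Q : ℤ → ℤ → A) (S : Finset ℤ) (j : ℤ) :
    mulLax x y (fun j ↦ ∑ l ∈ S, r l * Q l j) j = ∑ l ∈ S, r l * mulLax x y (Q l) j := by
  simp only [mulLax, Finset.sum_mul, ← Finset.sum_add_distrib, ← Finset.sum_sub_distrib]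
  exact Finset.sum_congr rfl fun l _ ↦ by ring

lemma derivation_sum_mul {r c ρ γ : ℤ → A} {a b : ℤ} (hab : a ≤ b + 1)
    (hr : ∀ l, D (r l) = ρ l - mulLax x y r l) (hc : ∀ l, D (c l) = laxMul x y c l + γ l) :
    D (∑ l ∈ Finset.Icc a b, r l * c l) =
      ∑ l ∈ Finset.Icc a b, ρ l * c l + ∑ l ∈ Finset.Icc a b, r l * γ l
        - laxFlux x y r c (a - 1) + laxFlux x y r c b := by
  have hflux : ∀ l, D (r l * c l) = ρ l * c l + r l * γ l
      - (laxFlux x y r c (l - 1) - laxFlux x y r c (l + 1 - 1)) := fun l ↦ by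
    simp only [D.leibniz, hr, hc, smul_eq_mul, laxMul, mulLax, laxFlux, add_sub_cancel_right,
      sub_add_cancel]
    ring
  have htele := sum_Icc_sub_succ (fun l ↦ laxFlux x y r c (l - 1)) hab
  rw [add_sub_cancel_right] at htele
  rw [map_sum, Finset.sum_congr rfl fun l _ ↦ hflux l, Finset.sum_sub_distrib,
    Finset.sum_add_distrib, htele]
  ring

lemma IsToeplitzFlow.deriv_fst_eq_laxMul (h : IsToeplitzFlow D x y) (l : ℤ) :
    D (x l) = laxMul x y x l := by
  rw [h.deriv_fst, centralDiff, laxMul]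
  ring

lemma IsToeplitzFlow.deriv_snd_eq_neg_mulLax (h : IsToeplitzFlow D x y) (l : ℤ) :
    D (y (l - 1)) = -mulLax x y (fun l ↦ y (l - 1)) l := by
  rw [h.deriv_snd, centralDiff, mulLax]
  simp only [sub_add_cancel, add_sub_cancel_right]
  ring

lemma IsToeplitzFlow.isLax_L1e (h : IsToeplitzFlow D x y) : IsLax D x y (L1e x y) := fun i j ↦ by
  rcases (by omega : j < i + 1 ∨ j = i + 1 ∨ j = i + 2 ∨ i + 2 < j) with hj | rfl | rfl | hj
  · simp only [laxMul, mulLax, L1e_of_le x y (show j ≤ i + 1 by omega),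
      L1e_of_le x y (show j ≤ i + 1 + 1 by omega), L1e_of_le x y (show j ≤ i - 1 + 1 by omega),
      L1e_of_le x y (show j - 1 ≤ i + 1 by omega), L1e_of_le x y (show j + 1 ≤ i + 1 by omega),
      if_neg hj.ne, if_neg (show j ≠ i + 1 + 1 by omega), if_neg (show j - 1 ≠ i + 1 by omega),
      add_left_inj, sub_add_cancel, add_sub_cancel_right, zero_sub, map_neg, D.leibniz,
      h.deriv_fst, h.deriv_snd, centralDiff, smul_eq_mul]
    ring
  · simp only [laxMul, mulLax, L1e_of_le x y (show i + 1 ≤ i + 1 from le_rfl),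
      L1e_of_le x y (show i + 1 ≤ i + 1 + 1 by omega), L1e_of_le x y (show i ≤ i + 1 by omega),
      L1e_eq_zero x y (show i - 1 + 1 < i + 1 by omega),
      L1e_eq_zero x y (show i + 1 < i + 1 + 1 by omega), add_sub_cancel_right, if_true,
      if_neg (show i ≠ i + 1 by omega), if_neg (show i + 1 ≠ i + 1 + 1 by omega), zero_sub, map_sub,
      D.map_one_eq_zero, D.leibniz, h.deriv_fst, h.deriv_snd, centralDiff, smul_eq_mul]
    ring
  · simp only [laxMul, mulLax, show i + 2 = i + 1 + 1 by ring,
      L1e_of_le x y (show i + 1 + 1 ≤ i + 1 + 1 from le_rfl),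
      L1e_of_le x y (show i + 1 ≤ i + 1 from le_rfl),
      L1e_eq_zero x y (show i + 1 < i + 1 + 1 by omega),
      L1e_eq_zero x y (show i - 1 + 1 < i + 1 + 1 by omega),
      L1e_eq_zero x y (show i + 1 < i + 1 + 1 + 1 by omega), add_sub_cancel_right, if_true,
      map_zero]
    ring
  · simp only [laxMul, mulLax, L1e_eq_zero x y (show i + 1 < j by omega),
      L1e_eq_zero x y (show i + 1 + 1 < j by omega), L1e_eq_zero x y (show i - 1 + 1 < j by omega),
      L1e_eq_zero x y (show i + 1 < j - 1 by omega), L1e_eq_zero x y (show i + 1 < j + 1 by omega),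
      map_zero]
    ring

lemma isLax_L1pow_zero (D : IntDerivation A) (x y : ℤ → A) : IsLax D x y (L1pow x y 0) :=
  fun i j ↦ by
  have hD : D (if i = j then (1 : A) else 0) = 0 := by split_ifs <;> simp
  simp only [laxMul, mulLax, L1pow, hD, show i + 1 = j ↔ i = j - 1 by omega,
    show i - 1 = j ↔ i = j + 1 by omega]
  split_ifs <;> first | omega | (subst_vars; simp)

lemma IsToeplitzFlow.isLax_L1pow (h : IsToeplitzFlow D x y) (s : ℕ) :
    IsLax D x y (L1pow x y s) := by
  induction s with
  | zero => exact isLax_L1pow_zero D x y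
  | succ s ih =>
    intro i j
    set b : ℤ := i + s + 1
    set a : ℤ := min (j - 2) b
    have hrow : ∀ i' ≤ i + 1, L1pow x y (s + 1) i' j =
        ∑ l ∈ Finset.Icc a b, L1pow x y s i' l * L1e x y l j :=
      fun i' _ ↦ L1pow_succ x y s (by omega) (by omega)
    have hcol : ∀ j' ≥ j - 1, L1pow x y (s + 1) i j' =
        ∑ l ∈ Finset.Icc a b, L1pow x y s i l * L1e x y l j' :=
      fun j' _ ↦ L1pow_succ x y s (by omega) (by omega)
    have hleft : laxFlux x y (L1pow x y s i) (L1e x y · j) (a - 1) = 0 :=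
      laxFlux_eq_zero_of_right (L1e_eq_zero x y (by omega)) (L1e_eq_zero x y (by omega))
    have hright : laxFlux x y (L1pow x y s i) (L1e x y · j) b = 0 :=
      laxFlux_eq_zero_of_left (L1pow_eq_zero x y s (by omega)) (L1pow_eq_zero x y s (by omega))
    rw [hcol j (by omega), derivation_sum_mul (by omega) (ih i)
      (fun l ↦ (h.isLax_L1e l j).trans (sub_eq_add_neg _ _)), hleft, hright,
      laxMul_congr hrow, mulLax_congr hcol, laxMul_sum, mulLax_sum]
    simp only [mul_neg, Finset.sum_neg_distrib, ← sub_eq_add_neg, sub_zero, add_zero]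

lemma IsToeplitzFlow.derivation_rowTail (h : IsToeplitzFlow D x y) (s : ℕ) (i j : ℤ) :
    D (rowTail x y s i j) =
      laxMul x y (rowTail x y s · j) i - laxFlux x y (L1pow x y s i) x (j - 1) := by
  set b : ℤ := max j (i + s + 1)
  have hsum : ∀ i' ≤ i + 1, rowTail x y s i' j = ∑ l ∈ Finset.Icc j b, L1pow x y s i' l * x l :=
    fun i' _ ↦ by
      rw [rowTail_eq_sum x y s (b := b) (by omega)]
      exact Finset.sum_congr rfl fun l _ ↦ mul_comm _ _
  have hright : laxFlux x y (L1pow x y s i) x b = 0 :=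
    laxFlux_eq_zero_of_left (L1pow_eq_zero x y s (by omega)) (L1pow_eq_zero x y s (by omega))
  rw [hsum i (by omega), derivation_sum_mul (γ := 0) (by omega) (h.isLax_L1pow s i)
    (fun l ↦ (h.deriv_fst_eq_laxMul l).trans (add_zero _).symm), hright, laxMul_congr hsum,
    laxMul_sum]
  simp

lemma IsToeplitzFlow.derivation_colHead (h : IsToeplitzFlow D x y) (s : ℕ) (i j : ℤ) :
    D (colHead x y s i j) = laxFlux x y (fun l ↦ y (l - 1)) (L1pow x y s · j) i -
      mulLax x y (colHead x y s i) j := by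
  set a : ℤ := min i (j - s - 1)
  have hsum : ∀ j' ≥ j - 1, colHead x y s i j' =
      ∑ l ∈ Finset.Icc a i, y (l - 1) * L1pow x y s l j' :=
    fun j' _ ↦ colHead_eq_sum x y s (by omega)
  have hleft : laxFlux x y (fun l ↦ y (l - 1)) (L1pow x y s · j) (a - 1) = 0 :=
    laxFlux_eq_zero_of_right (L1pow_eq_zero x y s (by omega)) (L1pow_eq_zero x y s (by omega))
  rw [hsum j (by omega), derivation_sum_mul (ρ := 0) (by omega)
    (fun l ↦ (h.deriv_snd_eq_neg_mulLax l).trans (zero_sub _).symm)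
    (fun l ↦ (h.isLax_L1pow s l j).trans (sub_eq_add_neg _ _)), hleft, mulLax_congr hsum,
    mulLax_sum]
  simp [sub_eq_neg_add]

lemma IsToeplitzFlow.derivation_rowTail_diag (h : IsToeplitzFlow D x y) (s : ℕ) (k : ℤ) :
    D (rowTail x y s (k + 1) k) =
      (1 - x (k + 1) * y (k + 1)) * rowTail x y s (k + 1 + 1) (k + 1)
        - (1 - x (k - 1) * y (k - 1)) * rowTail x y s (k - 1 + 1) (k - 1)
        + x k * (centralDiff y k * rowTail x y s (k + 1) k
          + centralDiff x k * colHead x y s (k + 1) k) := by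
  have hD := h.derivation_rowTail s (k + 1) k
  have htail := rowTail_eq_add x y s k (k - 1)
  have htail' := rowTail_eq_add x y s (k + 1 + 1) k
  have hy := mul_rowTail x y s k (k - 1)
  have hy' := mul_rowTail_succ x y s (k + 1) (k - 1)
  have hx := mul_colHead x y s k k
  have hx' := mul_colHead_self x y s (k + 1) k
  simp only [laxMul, laxFlux, centralDiff, sub_add_cancel, add_sub_cancel_right]
    at hD htail hy hy' ⊢
  linear_combination hD + htail + (1 - x (k + 1) * y (k + 1)) * htail' - x (k - 1) * hy + x k * hy'
    + x (k - 1) * hx - x k * hx'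

lemma IsToeplitzFlow.derivation_colHead_diag (h : IsToeplitzFlow D x y) (s : ℕ) (k : ℤ) :
    D (colHead x y s (k + 1) k) =
      (1 - x (k + 1) * y (k + 1)) * colHead x y s (k + 1 + 1) (k + 1)
        - (1 - x (k - 1) * y (k - 1)) * colHead x y s (k - 1 + 1) (k - 1)
        + y k * (centralDiff x k * colHead x y s (k + 1) k
          + centralDiff y k * rowTail x y s (k + 1) k) := by
  have hD := h.derivation_colHead s (k + 1) k
  have hhead := colHead_succ x y s k (k - 1)
  have hhead' := colHead_succ x y s (k + 1) (k + 1)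
  have hy := mul_rowTail x y s (k + 1) k
  have hy' := mul_rowTail_succ x y s (k + 1) (k - 1)
  have hx := mul_colHead x y s (k + 1) (k + 1)
  have hx' := mul_colHead_self x y s (k + 1) k
  simp only [mulLax, laxFlux, centralDiff, sub_add_cancel, add_sub_cancel_right] at hD hy' ⊢
  linear_combination hD - hhead' - (1 - x (k - 1) * y (k - 1)) * hhead + y (k + 1) * hx
    - y k * hx' + y k * hy' - y (k + 1) * hy

end LaxPair

section Gamma

variable {A : Type*} [CommRing A]

/-- The contribution of `u_{s+1}` and `u_{-(s+1)}` to the factor `S_k` in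
`Γ_k = (1 - x_k y_k) S_k + k x_k`. -/
def gammaTerm (u x y : ℤ → A) (s : ℕ) (k : ℤ) : A :=
  u (s + 1) * rowTail x y s (k + 1) k + u (-(s + 1)) * colHead y x s (k + 1) k

/-- The factor `S_k` in `Γ_k = (1 - x_k y_k) S_k + k x_k`. -/
def gammaCore (N : ℕ) (u x y : ℤ → A) (k : ℤ) : A :=
  ∑ s ∈ Finset.range N, gammaTerm u x y s k

lemma GamA_eq_gammaCore (N : ℕ) (u x y : ℤ → A) (k : ℤ) :
    GamA N u x y k = (1 - x k * y k) * gammaCore N u x y k + k * x k := by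
  have hrange : Finset.Icc 1 N = (Finset.range N).map (addRightEmbedding 1) := by
    rw [Finset.range_eq_Ico, Finset.map_add_right_Ico, zero_add]
    rfl
  simp only [GamA, gammaCore, gammaTerm, hrange, Finset.sum_map, addRightEmbedding_apply,
    Nat.cast_add, Nat.cast_one, add_tsub_cancel_right, L2pow_eq_L1pow, Finset.sum_add_distrib,
    rowTail, colHead, add_right_comm k 1, add_assoc k, sub_add_eq_sub_sub, sub_add_cancel]

lemma GamB_eq_GamA_swap (N : ℕ) (u x y : ℤ → A) (k : ℤ) :
    GamB N u x y k = GamA N (fun i ↦ u (-i)) y x k := by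
  simp only [GamA, GamB, L2pow_eq_L1pow, neg_neg, mul_comm (y k), add_comm]

/-- The pair `(G, -H)` solves the linearisation of the first Toeplitz vector field along
`(x, y)`. -/
structure IsLinearizedFlow (D : IntDerivation A) (x y G H : ℤ → A) : Prop where
  deriv_fst : ∀ k, D (G k) =
    (1 - x k * y k) * centralDiff G k - centralDiff x k * (y k * G k - x k * H k)
  deriv_snd : ∀ k, D (H k) =
    (1 - x k * y k) * centralDiff H k + centralDiff y k * (y k * G k - x k * H k)

variable {D : IntDerivation A} {x y u : ℤ → A} {N : ℕ}

lemma IsToeplitzFlow.derivation_gammaTerm (h : IsToeplitzFlow D x y)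
    (hu : ∀ i, D (u i) = if i = 1 ∨ i = -1 then 1 else 0) (s : ℕ) (k : ℤ) :
    D (gammaTerm u x y s k) = (1 - x (k + 1) * y (k + 1)) * gammaTerm u x y s (k + 1)
        - (1 - x (k - 1) * y (k - 1)) * gammaTerm u x y s (k - 1)
        + (x k * centralDiff y k * gammaTerm u x y s k
          + x k * centralDiff x k * gammaTerm (fun i ↦ u (-i)) y x s k)
        + if s = 0 then x (k + 1) + x (k - 1) else 0 := by
  have hu₁ : D (u (s + 1)) = if s = 0 then 1 else 0 := by rw [hu]; congr 1; simp; omega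
  have hu₂ : D (u (-(s + 1))) = if s = 0 then 1 else 0 := by rw [hu]; congr 1; simp; omega
  simp only [gammaTerm, map_add, D.leibniz, h.derivation_rowTail_diag,
    h.symm.derivation_colHead_diag, hu₁, hu₂, neg_neg, smul_eq_mul]
  split_ifs with hs
  · subst hs
    rw [rowTail_zero x y k, colHead_zero y x k]
    ring
  · ring

lemma IsToeplitzFlow.derivation_gammaCore (h : IsToeplitzFlow D x y) (hN : 1 ≤ N)
    (hu : ∀ i, D (u i) = if i = 1 ∨ i = -1 then 1 else 0) (k : ℤ) :
    D (gammaCore N u x y k) = (1 - x (k + 1) * y (k + 1)) * gammaCore N u x y (k + 1)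
        - (1 - x (k - 1) * y (k - 1)) * gammaCore N u x y (k - 1)
        + (x k * centralDiff y k * gammaCore N u x y k
          + x k * centralDiff x k * gammaCore N (fun i ↦ u (-i)) y x k)
        + (x (k + 1) + x (k - 1)) := by
  simp only [gammaCore, map_sum, h.derivation_gammaTerm hu, Finset.sum_add_distrib,
    Finset.sum_sub_distrib, ← Finset.mul_sum, Finset.sum_ite_eq', Finset.mem_range,
    if_pos (show 0 < N from hN)]

lemma IsToeplitzFlow.derivation_GamA (h : IsToeplitzFlow D x y) (hN : 1 ≤ N)
    (hu : ∀ i, D (u i) = if i = 1 ∨ i = -1 then 1 else 0) (k : ℤ) :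
    D (GamA N u x y k) = (1 - x k * y k) * centralDiff (GamA N u x y) k
      - centralDiff x k * (y k * GamA N u x y k - x k * GamB N u x y k) := by
  simp only [GamB_eq_GamA_swap, centralDiff, GamA_eq_gammaCore, map_add, map_sub, D.leibniz,
    h.derivation_gammaCore hN hu, h.deriv_fst, h.deriv_snd, D.map_one_eq_zero, D.map_intCast,
    smul_eq_mul, Int.cast_add, Int.cast_sub, Int.cast_one]
  ring

theorem IsToeplitzFlow.isLinearizedFlow_Gam (h : IsToeplitzFlow D x y) (hN : 1 ≤ N)
    (hu : ∀ i, D (u i) = if i = 1 ∨ i = -1 then 1 else 0) :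
    IsLinearizedFlow D x y (GamA N u x y) (GamB N u x y) where
  deriv_fst := h.derivation_GamA hN hu
  deriv_snd k := by
    have hB : GamB N u x y = GamA N (fun i ↦ u (-i)) y x := funext (GamB_eq_GamA_swap N u x y)
    have hA : GamB N (fun i ↦ u (-i)) y x k = GamA N u x y k := by
      simp only [GamB_eq_GamA_swap, neg_neg]
    have hu' (i : ℤ) : D (u (-i)) = if i = 1 ∨ i = -1 then 1 else 0 := by
      simp only [hu, neg_eq_iff_eq_neg, neg_neg, or_comm]
    rw [hB, h.symm.derivation_GamA hN hu', hA]
    ring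

end Gamma

section LaurentSeries

variable {K : Type*} [Field K] {f g : LaurentSeries K} {a b m : ℤ}

lemma coeff_derivative (f : LaurentSeries K) (m : ℤ) :
    (LaurentSeries.derivative K f).coeff m = ((m + 1 : ℤ) : K) * f.coeff (m + 1) := by
  rw [LaurentSeries.derivative_apply, LaurentSeries.hasseDeriv_coeff, Nat.cast_one,
    Ring.choose_one_right, zsmul_eq_mul]

lemma coeff_single_mul_derivative (f : LaurentSeries K) (m : ℤ) :
    (HahnSeries.single (1 : ℤ) (1 : K) * LaurentSeries.derivative K f).coeff m = m * f.coeff m := by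
  rw [HahnSeries.coeff_single_mul, coeff_derivative, one_mul, sub_add_cancel]

lemma support_single_mul_derivative_subset (f : LaurentSeries K) :
    (HahnSeries.single (1 : ℤ) (1 : K) * LaurentSeries.derivative K f).support ⊆ f.support :=
  fun m hm ↦ by
  rw [HahnSeries.mem_support, coeff_single_mul_derivative] at hm
  exact right_ne_zero_of_mul hm

/-- The Leibniz rule holds coefficientwise for the Euler operator `t d/dt`, which acts on the
coefficient of `t^m` as multiplication by `m`. -/
lemma derivative_mul (f g : LaurentSeries K) :
    LaurentSeries.derivative K (f * g) =
      f * LaurentSeries.derivative K g + g * LaurentSeries.derivative K f := by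
  set t : LaurentSeries K := HahnSeries.single 1 1
  have ht₀ : t ≠ 0 := HahnSeries.single_ne_zero one_ne_zero
  suffices t * LaurentSeries.derivative K (f * g) =
      f * (t * LaurentSeries.derivative K g) + t * LaurentSeries.derivative K f * g from
    mul_left_cancel₀ ht₀ (by linear_combination this)
  ext m
  rw [HahnSeries.coeff_add, coeff_single_mul_derivative,
    HahnSeries.coeff_mul_right' g.isPWO_support (support_single_mul_derivative_subset g),
    HahnSeries.coeff_mul_left' f.isPWO_support (support_single_mul_derivative_subset f),
    HahnSeries.coeff_mul, Finset.mul_sum, ← Finset.sum_add_distrib]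
  refine Finset.sum_congr rfl fun ij hij ↦ ?_
  have hm : ij.1 + ij.2 = m := (Finset.mem_antidiagonal.1 hij).2.2
  rw [coeff_single_mul_derivative, coeff_single_mul_derivative, ← hm, Int.cast_add]
  ring

/-- The derivation `d/dt` of the field of formal Laurent series. -/
def laurentDerivation (K : Type*) [Field K] : IntDerivation (LaurentSeries K) :=
  .ofLeibniz (LaurentSeries.derivative K : LaurentSeries K →ₗ[K] _).toAddMonoidHom derivative_mul

lemma coeff_laurentDerivation (f : LaurentSeries K) (m : ℤ) :
    (laurentDerivation K f).coeff m = ((m + 1 : ℤ) : K) * f.coeff (m + 1) :=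
  coeff_derivative f m

lemma laurentDerivation_C (c : K) : laurentDerivation K (HahnSeries.C c) = 0 := by
  ext m
  rw [coeff_laurentDerivation, HahnSeries.C_apply, HahnSeries.coeff_single, HahnSeries.coeff_zero]
  split_ifs with hm
  · rw [hm, Int.cast_zero, zero_mul]
  · exact mul_zero _

lemma laurentDerivation_single_one :
    laurentDerivation K (HahnSeries.single (1 : ℤ) (1 : K)) = 1 := by
  ext m
  rw [coeff_laurentDerivation, HahnSeries.coeff_one, HahnSeries.coeff_single]
  split_ifs <;> first | omega | simp_all

lemma isToeplitzFlow_of_isSolT {x y : ℤ → LaurentSeries K} (h : IsSolT x y) :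
    IsToeplitzFlow (laurentDerivation K) x y where
  deriv_fst k := by ext m; rw [coeff_laurentDerivation]; exact (h k m).1
  deriv_snd k := by ext m; rw [coeff_laurentDerivation]; exact (h k m).2

lemma bigO_iff_le_orderTop : BigO f m ↔ (m : WithTop ℤ) ≤ f.orderTop := by
  simp only [BigO, HahnSeries.le_orderTop_iff_forall, WithTop.coe_lt_coe]

lemma bigO_one : BigO (1 : LaurentSeries K) 0 := by
  rw [bigO_iff_le_orderTop, HahnSeries.orderTop_one, WithTop.coe_zero]

lemma BigO.mono (hf : BigO f b) (hab : a ≤ b) : BigO f a := fun i hi ↦ hf i (hi.trans_le hab)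

lemma BigO.add (hf : BigO f m) (hg : BigO g m) : BigO (f + g) m := fun i hi ↦ by
  rw [HahnSeries.coeff_add, hf i hi, hg i hi, add_zero]

lemma BigO.sub (hf : BigO f m) (hg : BigO g m) : BigO (f - g) m := fun i hi ↦ by
  rw [HahnSeries.coeff_sub, hf i hi, hg i hi, sub_zero]

lemma BigO.mul (hf : BigO f a) (hg : BigO g b) (hm : m ≤ a + b) : BigO (f * g) m := by
  rw [bigO_iff_le_orderTop] at *
  calc (m : WithTop ℤ) ≤ a + b := by exact_mod_cast hm
    _ ≤ f.orderTop + g.orderTop := add_le_add hf hg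
    _ ≤ (f * g).orderTop := HahnSeries.orderTop_add_le_mul

lemma BigO.coeff_mul (hf : BigO f a) (hg : BigO g b) (hm : a + b = m) :
    (f * g).coeff m = f.coeff a * g.coeff b := by
  rw [HahnSeries.coeff_mul, Finset.sum_eq_single (a, b)]
  · rintro ⟨i, j⟩ hij hne
    have hsum : i + j = m := (Finset.mem_antidiagonal.1 hij).2.2
    rcases lt_or_ge i a with hi | hi
    · rw [hf i hi, zero_mul]
    · rw [hg j (lt_of_not_ge fun hj ↦ hne (by ext <;> dsimp <;> omega)), mul_zero]
  · intro h
    by_contra hne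
    exact h (Finset.mem_antidiagonal.2 ⟨left_ne_zero_of_mul hne, right_ne_zero_of_mul hne, hm⟩)

lemma BigO.of_mul_left (hfg : BigO (f * g) (a + b)) (hf : f.coeff a ≠ 0) : BigO g b := by
  have hfa : f.orderTop ≤ a := HahnSeries.orderTop_le_of_coeff_ne_zero hf
  rw [bigO_iff_le_orderTop] at *
  refine (WithTop.add_le_add_iff_left (WithTop.coe_ne_top (a := a))).1 ?_
  calc (a + b : WithTop ℤ) = ((a + b : ℤ) : WithTop ℤ) := by norm_cast
    _ ≤ (f * g).orderTop := hfg
    _ = f.orderTop + g.orderTop := HahnSeries.orderTop_mul f g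
    _ ≤ a + g.orderTop := by gcongr

lemma BigO.succ (hf : BigO f m) (hm : f.coeff m = 0) : BigO f (m + 1) := fun i hi ↦ by
  rcases (Int.lt_add_one_iff.1 hi).eq_or_lt with rfl | hi
  · exact hm
  · exact hf i hi

lemma BigO.laurentDerivation (hf : BigO f m) : BigO (laurentDerivation K f) (m - 1) :=
  fun i hi ↦ by rw [coeff_laurentDerivation, hf _ (by omega), mul_zero]

lemma eq_zero_of_forall_bigO (hf : ∀ m ≥ a, BigO f m) : f = 0 := by
  ext i
  exact hf (max a (i + 1)) (le_max_left _ _) i (by omega)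

lemma BigO.centralDiff {f : ℤ → LaurentSeries K} {k : ℤ} (hf : BigO (f (k + 1)) m)
    (hf' : BigO (f (k - 1)) m) : BigO (centralDiff f k) m :=
  hf.sub hf'

lemma coeff_centralDiff (f : ℤ → LaurentSeries K) (k m : ℤ) :
    (centralDiff f k).coeff m = (f (k + 1)).coeff m - (f (k - 1)).coeff m :=
  HahnSeries.coeff_sub

end LaurentSeries

section SimplePole

variable {K : Type*} [Field K] {x y G H : ℤ → LaurentSeries K} {k m n : ℤ} {p q : K}

/-- Both sequences are `O(t^m)` at site `k`. -/
def SiteBigO (G H : ℤ → LaurentSeries K) (k m : ℤ) : Prop := BigO (G k) m ∧ BigO (H k) m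

lemma SiteBigO.mono {a b : ℤ} (h : SiteBigO G H k b) (hab : a ≤ b) : SiteBigO G H k a :=
  ⟨h.1.mono hab, h.2.mono hab⟩

lemma SiteBigO.centralDiff (hsucc : SiteBigO G H (k + 1) m) (hpred : SiteBigO G H (k - 1) m) :
    SiteBigO (centralDiff G) (centralDiff H) k m :=
  ⟨.centralDiff hsucc.1 hpred.1, .centralDiff hsucc.2 hpred.2⟩

/-- The resonance number of site `k` at a solution with `x_k, y_k = O(t^d)` and
`x_{k+1} - x_{k-1}, y_{k+1} - y_{k-1} = O(t^{-d-1})`. In order `t^m` the terms of the linearised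
flow that couple the two unknowns of site `k` form a linear system with determinant
`m * (m + resonance x y k d)`. -/
def resonance (x y : ℤ → LaurentSeries K) (k d : ℤ) : K :=
  (y k).coeff d * (centralDiff x k).coeff (-d - 1)
    + (x k).coeff d * (centralDiff y k).coeff (-d - 1)

lemma IsLinearizedFlow.siteBigO_succ [CharZero K]
    (h : IsLinearizedFlow (laurentDerivation K) x y G H) {a b d : ℤ}
    (hxy : SiteBigO x y k d) (hΔ : SiteBigO (centralDiff x) (centralDiff y) k (-d - 1))
    (hv : BigO (1 - x k * y k) a) (hGH : SiteBigO G H k m)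
    (hsucc : SiteBigO G H (k + 1) b) (hpred : SiteBigO G H (k - 1) b) (hab : m ≤ a + b)
    (hm : m ≠ 0) (hres : m + resonance x y k d ≠ 0) :
    SiteBigO G H k (m + 1) := by
  have hm' : (m : K) ≠ 0 := Int.cast_ne_zero.2 hm
  have hΔG : BigO ((1 - x k * y k) * centralDiff G k) m := hv.mul (hsucc.centralDiff hpred).1 hab
  have hΔH : BigO ((1 - x k * y k) * centralDiff H k) m := hv.mul (hsucc.centralDiff hpred).2 hab
  obtain ⟨w, hw_def⟩ : ∃ w, w = y k * G k - x k * H k := ⟨_, rfl⟩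
  have hw : BigO w (d + m) :=
    hw_def ▸ (hxy.2.mul hGH.1 le_rfl).sub (hxy.1.mul hGH.2 le_rfl)
  have hwd : w.coeff (d + m) = (y k).coeff d * (G k).coeff m - (x k).coeff d * (H k).coeff m := by
    rw [hw_def, HahnSeries.coeff_sub, hxy.2.coeff_mul hGH.1 rfl, hxy.1.coeff_mul hGH.2 rfl]
  have hg : m * (G k).coeff m = -((centralDiff x k).coeff (-d - 1) * w.coeff (d + m)) := by
    have := congrArg (HahnSeries.coeff · (m - 1)) (h.deriv_fst k)
    simpa only [← hw_def, coeff_laurentDerivation, sub_add_cancel, HahnSeries.coeff_sub,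
      hΔG (m - 1) (by omega), hΔ.1.coeff_mul hw (show _ = m - 1 by ring), zero_sub] using this
  have hh : m * (H k).coeff m = (centralDiff y k).coeff (-d - 1) * w.coeff (d + m) := by
    have := congrArg (HahnSeries.coeff · (m - 1)) (h.deriv_snd k)
    simpa only [← hw_def, coeff_laurentDerivation, sub_add_cancel, HahnSeries.coeff_add,
      hΔH (m - 1) (by omega), hΔ.2.coeff_mul hw (show _ = m - 1 by ring), zero_add] using this
  have hw₀ : w.coeff (d + m) = 0 := by
    refine (mul_eq_zero.1 ?_).resolve_left hres
    rw [resonance]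
    linear_combination (m : K) * hwd + (y k).coeff d * hg - (x k).coeff d * hh
  rw [hw₀, mul_zero] at hg hh
  rw [neg_zero] at hg
  exact ⟨hGH.1.succ ((mul_eq_zero.1 hg).resolve_left hm'),
    hGH.2.succ ((mul_eq_zero.1 hh).resolve_left hm')⟩

/-- The sequences `x`, `y` have a simple pole at site `n` and are regular at all other sites, with
the leading coefficients of the principal balance; `p` and `q` are the values of `x_{n+1}` and
`x_{n-1}` at `t = 0`. -/
structure HasSimplePole (x y : ℤ → LaurentSeries K) (n : ℤ) (p q : K) : Prop where
  succ_ne_zero : p ≠ 0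
  pred_ne_zero : q ≠ 0
  sub_ne_zero : q - p ≠ 0
  regular : ∀ k ≠ n, SiteBigO x y k 0
  pole : SiteBigO x y n (-1)
  coeff_fst_succ : (x (n + 1)).coeff 0 = p
  coeff_fst_pred : (x (n - 1)).coeff 0 = q
  coeff_snd_succ : (y (n + 1)).coeff 0 = p⁻¹
  coeff_snd_pred : (y (n - 1)).coeff 0 = q⁻¹
  coeff_fst : (x n).coeff (-1) = q * p / (q - p)
  coeff_snd : (y n).coeff (-1) = -1 / (q - p)

/-- The induction hypothesis of the vanishing argument: order `m` at every site, except that the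
pole site lags one order behind. -/
def VanishesToOrder (G H : ℤ → LaurentSeries K) (n m : ℤ) : Prop :=
  SiteBigO G H n (m - 1) ∧ ∀ k ≠ n, SiteBigO G H k m

namespace HasSimplePole

lemma siteBigO_neg_one (P : HasSimplePole x y n p q) (k : ℤ) : SiteBigO x y k (-1) := by
  rcases eq_or_ne k n with rfl | hk
  · exact P.pole
  · exact (P.regular k hk).mono (by norm_num)

lemma siteBigO_centralDiff (P : HasSimplePole x y n p q) (k : ℤ) :
    SiteBigO (centralDiff x) (centralDiff y) k (-1) :=
  (P.siteBigO_neg_one _).centralDiff (P.siteBigO_neg_one _)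

lemma siteBigO_centralDiff_pole (P : HasSimplePole x y n p q) :
    SiteBigO (centralDiff x) (centralDiff y) n 0 :=
  (P.regular _ (by omega)).centralDiff (P.regular _ (by omega))

lemma coeff_centralDiff_fst_pred (P : HasSimplePole x y n p q) :
    (centralDiff x (n - 1)).coeff (-1) = q * p / (q - p) := by
  rw [coeff_centralDiff, sub_add_cancel, P.coeff_fst,
    (P.regular (n - 1 - 1) (by omega)).1 _ (by norm_num), sub_zero]

lemma bigO_one_sub_mul (P : HasSimplePole x y n p q) (hk : k ≠ n) : BigO (1 - x k * y k) 0 :=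
  bigO_one.sub ((P.regular k hk).1.mul (P.regular k hk).2 le_rfl)

lemma bigO_one_sub_mul_of_coeff_mul_eq_one (P : HasSimplePole x y n p q) (hk : k ≠ n)
    (h : (x k).coeff 0 * (y k).coeff 0 = 1) : BigO (1 - x k * y k) 1 := by
  refine (P.bigO_one_sub_mul hk).succ ?_
  rw [HahnSeries.coeff_sub, (P.regular k hk).1.coeff_mul (P.regular k hk).2 (add_zero 0), h,
    HahnSeries.coeff_one, if_pos rfl, sub_self]

lemma bigO_one_sub_mul_succ (P : HasSimplePole x y n p q) :
    BigO (1 - x (n + 1) * y (n + 1)) 1 :=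
  P.bigO_one_sub_mul_of_coeff_mul_eq_one (by omega)
    (by rw [P.coeff_fst_succ, P.coeff_snd_succ, mul_inv_cancel₀ P.succ_ne_zero])

lemma bigO_one_sub_mul_pred (P : HasSimplePole x y n p q) :
    BigO (1 - x (n - 1) * y (n - 1)) 1 :=
  P.bigO_one_sub_mul_of_coeff_mul_eq_one (by omega)
    (by rw [P.coeff_fst_pred, P.coeff_snd_pred, mul_inv_cancel₀ P.pred_ne_zero])

lemma bigO_one_sub_mul_pole (P : HasSimplePole x y n p q) : BigO (1 - x n * y n) (-2) :=
  (bigO_one.mono (by norm_num)).sub (P.pole.1.mul P.pole.2 (by norm_num))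

lemma coeff_one_sub_mul_pole_ne_zero (P : HasSimplePole x y n p q) :
    (1 - x n * y n).coeff (-2) ≠ 0 := by
  have := P.succ_ne_zero
  have := P.pred_ne_zero
  have := P.sub_ne_zero
  rw [HahnSeries.coeff_sub, P.pole.1.coeff_mul P.pole.2 (by norm_num), P.coeff_fst,
    P.coeff_snd, bigO_one _ (by norm_num)]
  field_simp
  simp [*]

lemma resonance_of_far (P : HasSimplePole x y n p q) (hsucc : k + 1 ≠ n) (hpred : k - 1 ≠ n) :
    resonance x y k 0 = 0 := by
  simp [resonance, coeff_centralDiff, (P.regular _ hsucc).1 (-1), (P.regular _ hpred).1 (-1),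
    (P.regular _ hsucc).2 (-1), (P.regular _ hpred).2 (-1)]

lemma resonance_succ (P : HasSimplePole x y n p q) : resonance x y (n + 1) 0 = -1 := by
  have := P.succ_ne_zero
  have := P.sub_ne_zero
  have hfar : SiteBigO x y (n + 1 + 1) 0 := P.regular _ (by omega)
  simp only [resonance, coeff_centralDiff, add_sub_cancel_right, neg_zero, zero_sub,
    hfar.1 (-1) (by norm_num), hfar.2 (-1) (by norm_num),
    P.coeff_fst_succ, P.coeff_snd_succ, P.coeff_fst, P.coeff_snd]
  field_simp
  ring

lemma resonance_pred (P : HasSimplePole x y n p q) : resonance x y (n - 1) 0 = -1 := by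
  have := P.pred_ne_zero
  have := P.sub_ne_zero
  have hfar : SiteBigO x y (n - 1 - 1) 0 := P.regular _ (by omega)
  simp only [resonance, coeff_centralDiff, sub_add_cancel, neg_zero, zero_sub, sub_zero,
    hfar.1 (-1) (by norm_num), hfar.2 (-1) (by norm_num),
    P.coeff_fst_pred, P.coeff_snd_pred, P.coeff_fst, P.coeff_snd]
  field_simp
  ring

lemma resonance_pole (P : HasSimplePole x y n p q) : resonance x y n (-1) = 2 := by
  have := P.succ_ne_zero
  have := P.pred_ne_zero
  have := P.sub_ne_zero
  simp only [resonance, coeff_centralDiff, neg_neg, sub_self, P.coeff_fst_succ, P.coeff_snd_succ,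
    P.coeff_fst_pred, P.coeff_snd_pred, P.coeff_fst, P.coeff_snd]
  field_simp
  ring

section Step

variable [CharZero K]

lemma siteBigO_succ_of_far (P : HasSimplePole x y n p q)
    (h : IsLinearizedFlow (laurentDerivation K) x y G H) (hk : k ≠ n) (hsucc_ne : k + 1 ≠ n)
    (hpred_ne : k - 1 ≠ n) (hm : m ≠ 0) (hGH : SiteBigO G H k m)
    (hsucc : SiteBigO G H (k + 1) m) (hpred : SiteBigO G H (k - 1) m) :
    SiteBigO G H k (m + 1) :=
  h.siteBigO_succ (P.regular k hk) (P.siteBigO_centralDiff k) (P.bigO_one_sub_mul hk) hGH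
    hsucc hpred (zero_add m).ge hm
    (by rw [P.resonance_of_far hsucc_ne hpred_ne, add_zero]; exact_mod_cast hm)

lemma siteBigO_succ_of_neighbour (P : HasSimplePole x y n p q)
    (h : IsLinearizedFlow (laurentDerivation K) x y G H) (hk : k = n + 1 ∨ k = n - 1)
    (hm₀ : m ≠ 0) (hm₁ : m ≠ 1) (hGH : SiteBigO G H k m)
    (hsucc : SiteBigO G H (k + 1) (m - 1)) (hpred : SiteBigO G H (k - 1) (m - 1)) :
    SiteBigO G H k (m + 1) := by
  have hres : resonance x y k 0 = -1 := by
    rcases hk with rfl | rfl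
    exacts [P.resonance_succ, P.resonance_pred]
  have hv : BigO (1 - x k * y k) 1 := by
    rcases hk with rfl | rfl
    exacts [P.bigO_one_sub_mul_succ, P.bigO_one_sub_mul_pred]
  refine h.siteBigO_succ (P.regular k (by omega)) (P.siteBigO_centralDiff k) hv hGH hsucc hpred
    (by omega) hm₀ ?_
  rw [hres, ← sub_eq_add_neg, _root_.sub_ne_zero]
  exact_mod_cast hm₁

lemma siteBigO_succ_of_pole (P : HasSimplePole x y n p q)
    (h : IsLinearizedFlow (laurentDerivation K) x y G H) (hm₀ : m ≠ 0) (hm₂ : m + 2 ≠ 0)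
    (hGH : SiteBigO G H n m) (hsucc : SiteBigO G H (n + 1) (m + 2))
    (hpred : SiteBigO G H (n - 1) (m + 2)) : SiteBigO G H n (m + 1) :=
  h.siteBigO_succ P.pole P.siteBigO_centralDiff_pole P.bigO_one_sub_mul_pole hGH hsucc hpred
    (by omega) hm₀ (by rw [P.resonance_pole]; exact_mod_cast hm₂)

end Step

lemma siteBigO_centralDiff_of_pole (P : HasSimplePole x y n p q)
    (h : IsLinearizedFlow (laurentDerivation K) x y G H) (hGH : SiteBigO G H n m) :
    SiteBigO (centralDiff G) (centralDiff H) n (m + 1) := by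
  have hw : BigO (y n * G n - x n * H n) (m - 1) :=
    (P.pole.2.mul hGH.1 (by omega)).sub (P.pole.1.mul hGH.2 (by omega))
  have hΔ := P.siteBigO_centralDiff_pole
  have hm : -2 + (m + 1) = m - 1 := by ring
  constructor
  · refine .of_mul_left (hm ▸ ?_) P.coeff_one_sub_mul_pole_ne_zero
    rw [eq_add_of_sub_eq (h.deriv_fst n).symm]
    exact hGH.1.laurentDerivation.add (hΔ.1.mul hw (by omega))
  · refine .of_mul_left (hm ▸ ?_) P.coeff_one_sub_mul_pole_ne_zero
    rw [eq_sub_of_add_eq (h.deriv_snd n).symm]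
    exact hGH.2.laurentDerivation.sub (hΔ.2.mul hw (by omega))

/-- At site `n - 1` the simple pole of `x_n - x_{n-2}` in the equation of `Γ_{n-1}` isolates the
combination `y_{n-1} Γ_{n-1} - x_{n-1} Γ̃_{n-1}`. -/
lemma bigO_snd_pred (P : HasSimplePole x y n p q)
    (h : IsLinearizedFlow (laurentDerivation K) x y G H) (hG : BigO (G (n - 1)) m)
    (hsucc : BigO (G n) (m - 2)) (hpred : BigO (G (n - 1 - 1)) (m - 2)) :
    BigO (H (n - 1)) m := by
  have hΔ₀ : (centralDiff x (n - 1)).coeff (-1) ≠ 0 := by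
    rw [P.coeff_centralDiff_fst_pred]
    exact div_ne_zero (mul_ne_zero P.pred_ne_zero P.succ_ne_zero) P.sub_ne_zero
  have hΔG : BigO (centralDiff G (n - 1)) (m - 2) :=
    .centralDiff (by rwa [sub_add_cancel]) hpred
  have hw : BigO (y (n - 1) * G (n - 1) - x (n - 1) * H (n - 1)) m := by
    refine .of_mul_left ?_ hΔ₀
    rw [← sub_sub_cancel ((1 - x (n - 1) * y (n - 1)) * centralDiff G (n - 1))
      (centralDiff x (n - 1) * _), ← h.deriv_fst]
    exact (P.bigO_one_sub_mul_pred.mul hΔG (by omega)).sub (hG.laurentDerivation.mono (by omega))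
  have hx₀ : (x (n - 1)).coeff 0 ≠ 0 := P.coeff_fst_pred.symm ▸ P.pred_ne_zero
  refine .of_mul_left (a := 0) ?_ hx₀
  rw [← sub_sub_cancel (y (n - 1) * G (n - 1)) (x (n - 1) * H (n - 1)), zero_add]
  exact ((P.regular (n - 1) (by omega)).2.mul hG (by omega)).sub hw

lemma vanishesToOrder_two [CharZero K] (P : HasSimplePole x y n p q)
    (h : IsLinearizedFlow (laurentDerivation K) x y G H) (hO : ∀ k ≠ n + 1, SiteBigO G H k 1)
    (hG : BigO (G (n - 1)) 2) : VanishesToOrder G H n 2 := by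
  have hpole : SiteBigO G H n 1 := hO n (by omega)
  have hpred : SiteBigO G H (n - 1) 2 :=
    ⟨hG, P.bigO_snd_pred h hG (hpole.1.mono (by omega)) ((hO _ (by omega)).1.mono (by omega))⟩
  have hsucc : SiteBigO G H (n + 1) 2 := by
    have hΔ := P.siteBigO_centralDiff_of_pole h hpole
    exact ⟨by simpa [centralDiff] using hΔ.1.add hpred.1,
      by simpa [centralDiff] using hΔ.2.add hpred.2⟩
  have hO' (k : ℤ) : SiteBigO G H k 1 := by
    rcases eq_or_ne k (n + 1) with rfl | hk
    exacts [hsucc.mono (by omega), hO k hk]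
  refine ⟨hpole, fun k hk ↦ ?_⟩
  rcases eq_or_ne k (n + 1) with rfl | hk_succ
  · exact hsucc
  rcases eq_or_ne k (n - 1) with rfl | hk_pred
  · exact hpred
  · exact P.siteBigO_succ_of_far h hk (by omega) (by omega) one_ne_zero (hO' _) (hO' _) (hO' _)

lemma vanishesToOrder_succ [CharZero K] (P : HasSimplePole x y n p q)
    (h : IsLinearizedFlow (laurentDerivation K) x y G H) (hm : 2 ≤ m)
    (hGH : VanishesToOrder G H n m) : VanishesToOrder G H n (m + 1) := by
  obtain ⟨hpole, hreg⟩ := hGH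
  have hall (k : ℤ) : SiteBigO G H k (m - 1) := by
    rcases eq_or_ne k n with rfl | hk
    exacts [hpole, (hreg k hk).mono (by omega)]
  have hneighbour {k : ℤ} (hk : k = n + 1 ∨ k = n - 1) : SiteBigO G H k (m + 1) :=
    P.siteBigO_succ_of_neighbour h hk (by omega) (by omega) (hreg k (by omega)) (hall _) (hall _)
  refine ⟨?_, fun k hk ↦ ?_⟩
  · have := P.siteBigO_succ_of_pole h (by omega) (by omega) hpole
      ((hneighbour (.inl rfl)).mono (by omega)) ((hneighbour (.inr rfl)).mono (by omega))
    exact this.mono (by omega)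
  · by_cases hk' : k = n + 1 ∨ k = n - 1
    · exact hneighbour hk'
    · exact P.siteBigO_succ_of_far h hk (by omega) (by omega) (by omega) (hreg _ hk)
        (hreg _ (by omega)) (hreg _ (by omega))

theorem eq_zero_of_isLinearizedFlow [CharZero K] (P : HasSimplePole x y n p q)
    (h : IsLinearizedFlow (laurentDerivation K) x y G H) (hO : ∀ k ≠ n + 1, SiteBigO G H k 1)
    (hG : BigO (G (n - 1)) 2) (k : ℤ) : G k = 0 ∧ H k = 0 := by
  have hvanish (m : ℤ) (hm : 2 ≤ m) : VanishesToOrder G H n m :=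
    Int.leInduction (P.vanishesToOrder_two h hO hG)
      (fun _ hm hGH ↦ P.vanishesToOrder_succ h hm hGH) m hm
  have hsite (m : ℤ) (hm : 2 ≤ m) : SiteBigO G H k (m - 1) := by
    rcases eq_or_ne k n with rfl | hk
    exacts [(hvanish m hm).1, ((hvanish m hm).2 k hk).mono (by omega)]
  constructor
  · exact eq_zero_of_forall_bigO (a := 1) fun m hm ↦ by simpa using (hsite (m + 1) (by omega)).1
  · exact eq_zero_of_forall_bigO (a := 1) fun m hm ↦ by simpa using (hsite (m + 1) (by omega)).2

end HasSimplePole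

lemma laurentDerivation_C_add_ite (c : K) (i : ℤ) :
    laurentDerivation K (HahnSeries.C c +
      if i = 1 ∨ i = -1 then HahnSeries.single (1 : ℤ) (1 : K) else 0) =
      if i = 1 ∨ i = -1 then 1 else 0 := by
  rw [map_add, laurentDerivation_C, zero_add, apply_ite (laurentDerivation K),
    laurentDerivation_single_one, map_zero]

end SimplePole

end SingConf

/-- In the setting of the general tangency proposition, suppose in addition
that `Γ_k(t) = O(t)` and `Γ̃_k(t) = O(t)` for all `k ≠ n + 1`, that `Γ_{n-1}(t) = O(t²)`,
and that `Γ_{n+1}(t) = O(t)`. Then `Γ_k(t) = 0 = Γ̃_k(t)` for all `k ∈ ℤ`. -/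
theorem statement7 (hN : 1 ≤ N)
    (u : ℤ → F) (huN : u (N : ℤ) ≠ 0) (huN' : u (-(N : ℤ)) ≠ 0)
    (x y : ℤ → LaurentSeries F) (hsol : IsSolT x y)
    (an1 am1 ap am : F)
    (hnopole : ∀ k, k ≠ n → BigO (x k) 0 ∧ BigO (y k) 0)
    (hv : ∀ k, 2 ≤ |k - n| → 1 - (x k).coeff 0 * (y k).coeff 0 ≠ 0)
    (hx1 : (x (n + 1)).coeff 0 = an1) (hx1' : (x (n - 1)).coeff 0 = am1)
    (hy1 : (y (n + 1)).coeff 0 = an1⁻¹) (hy1' : (y (n - 1)).coeff 0 = am1⁻¹)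
    (hx1t : (x (n + 1)).coeff 1 = an1 * ap) (hx1t' : (x (n - 1)).coeff 1 = am1 * am)
    (hy1t : (y (n + 1)).coeff 1 = -(ap / am1)) (hy1t' : (y (n - 1)).coeff 1 = -(am / an1))
    (hreg : an1 * am1 * (an1 - am1) ≠ 0) (hreg' : ap * am ≠ 0)
    (hxn : BigO (x n) (-1)) (hyn : BigO (y n) (-1))
    (hxnc : (x n).coeff (-1) = am1 * an1 / (am1 - an1))
    (hync : (y n).coeff (-1) = -1 / (am1 - an1))
    (ut : ℤ → LaurentSeries F)
    (hut : ∀ i : ℤ, ut i = HahnSeries.C (u i) +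
      (if i = 1 ∨ i = -1 then HahnSeries.single (1 : ℤ) (1 : F) else 0))
    (G Gt : ℤ → LaurentSeries F)
    (hG : ∀ k, G k = GamA N ut x y k) (hGt : ∀ k, Gt k = GamB N ut x y k)
    -- the additional hypotheses:
    (hO1 : ∀ k, k ≠ n + 1 → BigO (G k) 1 ∧ BigO (Gt k) 1)
    (hO2 : BigO (G (n - 1)) 2)
    (hO3 : BigO (G (n + 1)) 1) :
    ∀ k, G k = 0 ∧ Gt k = 0 := by
  have hpole : HasSimplePole x y n an1 am1 :=
    { succ_ne_zero := left_ne_zero_of_mul (left_ne_zero_of_mul hreg)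
      pred_ne_zero := right_ne_zero_of_mul (left_ne_zero_of_mul hreg)
      sub_ne_zero := sub_ne_zero.2 (sub_ne_zero.1 (right_ne_zero_of_mul hreg)).symm
      regular := hnopole
      pole := ⟨hxn, hyn⟩
      coeff_fst_succ := hx1
      coeff_fst_pred := hx1'
      coeff_snd_succ := hy1
      coeff_snd_pred := hy1'
      coeff_fst := hxnc
      coeff_snd := hync }
  have hflow : IsLinearizedFlow (laurentDerivation F) x y G Gt := by
    rw [funext hG, funext hGt]
    exact (isToeplitzFlow_of_isSolT hsol).isLinearizedFlow_Gam hN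
      fun i ↦ by rw [hut, laurentDerivation_C_add_ite]
  exact hpole.eq_zero_of_isLinearizedFlow hflow hO1 hO2
end
end

section
/- For every k ∈ ℤ with k ≠ n, the constant term Γ_k^{(0)} of Γ_k(t) is a polynomial in the parameters a_{k−N}, a_{k−N+1}, …, a_{k+N}, a_+, a_− only (with coefficients involving only k, ε and u_1, …, u_N; here a_{n±1} = ∓1 and a_n is absent from the list), i.e., Γ_k^{(0)} lies in the subring of K generated over ℚ(u_1,…,u_N) by a_{k−N}, …, a_{k+N}, a_+ and a_−. -/
/-!
Common definitions: the matrices `L₁`, `L₂` of the Toeplitz lattice, their powers,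
the recursion polynomials `Γ_k` (here `GamA`), `Γ̃_k` (here `GamB`) and their
self-dual version (`GamSD`), together with the notion of formal Laurent
solutions of the (self-dual) Toeplitz lattice.
-/

noncomputable section

namespace SingConf

/-- Indices `k` with `|k - n| ≥ 2`. -/
abbrev OffSD (n : ℤ) := {k : ℤ // k ≤ n - 2 ∨ n + 2 ≤ k}

/-- Indeterminates: the `a_k` (`|k - n| ≥ 2`), `a₊, a₋` (a `Bool`), and `u_1, …, u_N`. -/
abbrev IdxSD (n : ℤ) (N : ℕ) := OffSD n ⊕ (Bool ⊕ {i : ℕ // 1 ≤ i ∧ i ≤ N})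

/-- The field of rational functions over `ℚ` in the indeterminates
`a_k (|k - n| ≥ 2), a₊, a₋, u_1, …, u_N`. -/
abbrev KSD (n : ℤ) (N : ℕ) := FractionRing (MvPolynomial (IdxSD n N) ℚ)

/-- The indeterminate `a₊`. -/
def apSD (n : ℤ) (N : ℕ) : KSD n N :=
  algebraMap (MvPolynomial (IdxSD n N) ℚ) _ (MvPolynomial.X (Sum.inr (Sum.inl true)))

/-- The indeterminate `a₋`. -/
def amSD (n : ℤ) (N : ℕ) : KSD n N :=
  algebraMap (MvPolynomial (IdxSD n N) ℚ) _ (MvPolynomial.X (Sum.inr (Sum.inl false)))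

/-- The parameters `a_k`, with the conventions `a_{n-1} = 1`, `a_{n+1} = -1`
(and the junk value `a_n = 0`; `a_n` does not exist). -/
def avSD (n : ℤ) (N : ℕ) : ℤ → KSD n N := fun k =>
  if k = n + 1 then -1
  else if k = n - 1 then 1
  else if h : k ≤ n - 2 ∨ n + 2 ≤ k then
    algebraMap (MvPolynomial (IdxSD n N) ℚ) _ (MvPolynomial.X (Sum.inl ⟨k, h⟩))
  else 0

/-- The indeterminates `u_1, …, u_N` (with junk value `0` out of range). -/
def uvSD (n : ℤ) (N : ℕ) : ℕ → KSD n N := fun i =>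
  if h : 1 ≤ i ∧ i ≤ N then
    algebraMap (MvPolynomial (IdxSD n N) ℚ) _ (MvPolynomial.X (Sum.inr (Sum.inr ⟨i, h⟩)))
  else 0

/-- The time-dependent parameters `u(t) = (u_1 + t, u_2, …, u_N)`. -/
def utSD (n : ℤ) (N : ℕ) : ℕ → LaurentSeries (KSD n N) := fun i =>
  HahnSeries.C (uvSD n N i) + (if i = 1 then HahnSeries.single (1 : ℤ) 1 else 0)

/-- `x(t)` is *the* formal Laurent solution over `KSD n N` of the self-dual Toeplitz lattice
such that only `x_n(t)` has a pole and `x_n(t) = -ε/(2t) + O(1)`,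
`x_{n±1}(t) = ∓ε + 4a_± t + O(t²)`, `x_k(t) = ε a_k + O(t)` for `|k - n| ≥ 2`. -/
def IsTheSDSol (n : ℤ) (N : ℕ) (ε : KSD n N) (x : ℤ → LaurentSeries (KSD n N)) : Prop :=
  IsSolSD x ∧ (∀ k, k ≠ n → BigO (x k) 0) ∧ BigO (x n) (-1) ∧
  (x n).coeff (-1) = -ε / 2 ∧
  (x (n + 1)).coeff 0 = -ε ∧ (x (n - 1)).coeff 0 = ε ∧
  (x (n + 1)).coeff 1 = 4 * ε * apSD n N ∧ (x (n - 1)).coeff 1 = 4 * ε * amSD n N ∧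
  (∀ k, 2 ≤ |k - n| → (x k).coeff 0 = ε * avSD n N k)

end SingConf

open SingConf MvPolynomial

/-!
The pole of `x_n` is cancelled inside the powers of `L`. Since `L` is a shift minus a rank-one
matrix cut off to a triangle, a row vector `r` satisfies `(rL)_j = r_{j-1} - x_{j-1} T_{j-1}` with
the tail sums `T_j = ∑_{l ≥ j} x_l r_l`. Let `G` be the ring of power series whose constant term
lies in the target ring `R`. The expansions at `t = 0` put `x_n v_{n+1}`, `x_n v_{n-1}` and
`x_n (x_{n+1} + x_{n-1})` into `G`, and this is exactly what makes right multiplication by `L`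
preserve the rows `r` with `r_l ∈ G` for `l ≠ n + 1`, `x_n r_n + x_{n+1} r_{n+1} ∈ G` and
`v_{n+1} r_{n+1} ∈ G`. The first sum in `Γ_k` is, up to the factor `v_k`, a tail sum of such a row,
and the reflection `m ↦ -m`, which transposes `L`, turns the second sum into the first.
-/

namespace SingConf

section MatrixPowers

variable {A : Type*} [CommRing A] (x y : ℤ → A)

theorem L1pow_eq_zero_of_lt {s : ℕ} {i j : ℤ} (h : i + s < j) : L1pow x y s i j = 0 := by
  cases s with
  | zero => exact if_neg (by simp only [Nat.cast_zero, add_zero] at h; omega)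
  | succ s =>
    simp only [L1pow]
    rw [Finset.Icc_eq_empty (by push_cast at h; omega), Finset.sum_empty]

variable {x y} in
theorem L1pow_congr {x' y' : ℤ → A} {s : ℕ} {i j : ℤ}
    (hx : ∀ m, j - s ≤ m → m < i + s → x m = x' m)
    (hy : ∀ m, j - s ≤ m → m < i + s → y m = y' m) :
    L1pow x y s i j = L1pow x' y' s i j := by
  induction s generalizing j with
  | zero => rfl
  | succ s ih =>
    push_cast at hx hy
    refine Finset.sum_congr rfl fun l hl => ?_
    rw [Finset.mem_Icc] at hl
    rw [ih (fun m _ _ => hx m (by omega) (by omega)) (fun m _ _ => hy m (by omega) (by omega)),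
      L1e, L1e, hx l (by omega) (by omega), hy (j - 1) (by omega) (by omega)]

theorem L1pow_succ_eq_sum_left (s : ℕ) (i j : ℤ) :
    L1pow x y (s + 1) i j =
      ∑ l ∈ Finset.Icc (j - (s : ℤ)) (i + 1), L1e x y i l * L1pow x y s l j := by
  induction s generalizing i j with
  | zero =>
    simp only [L1pow, Nat.cast_zero, add_zero, sub_zero, ite_mul, mul_ite, one_mul, zero_mul,
      mul_one, mul_zero, Finset.sum_ite_eq, Finset.sum_ite_eq', Finset.mem_Icc, le_refl, and_true,
      true_and, sub_le_iff_le_add]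
  | succ s ih =>
    calc L1pow x y (s + 1 + 1) i j
      _ = ∑ m ∈ Finset.Icc (j - 1) (i + ((s + 1 : ℕ) : ℤ)),
            ∑ l ∈ Finset.Icc (m - (s : ℤ)) (i + 1),
              L1e x y i l * (L1pow x y s l m * L1e x y m j) := by
          rw [L1pow]
          simp only [ih, Finset.sum_mul, mul_assoc]
      _ = ∑ l ∈ Finset.Icc (j - ((s + 1 : ℕ) : ℤ)) (i + 1),
            ∑ m ∈ Finset.Icc (j - 1) (l + (s : ℤ)),
              L1e x y i l * (L1pow x y s l m * L1e x y m j) := by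
          refine Finset.sum_comm' fun m l => ?_
          simp only [Finset.mem_Icc]
          omega
      _ = _ := by simp only [← Finset.mul_sum, L1pow]

end MatrixPowers

section Reflection

variable {A : Type*} [CommRing A] (x y : ℤ → A)

/-- The reflection `m ↦ -m` of the index lattice, acting on sequences. It transposes `L₁` up to a
shift of the indices, provided that the two sequences are also swapped (see `L1pow_reflect`). -/
def reflect (x : ℤ → A) : ℤ → A := fun m => x (-m)

theorem L1e_reflect (i j : ℤ) :
    L1e (reflect y) (reflect x) (1 - j) (1 - i) = L1e x y i j := by
  have hle : 1 - i ≤ 1 - j + 1 ↔ j ≤ i + 1 := by omega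
  have heq : 1 - j + 1 = 1 - i ↔ i + 1 = j := by omega
  have hi : -(1 - i - 1) = i := by ring
  simp only [L1e, reflect, hle, heq, hi, neg_sub, mul_comm (x i)]

theorem L1pow_reflect (s : ℕ) (i j : ℤ) :
    L1pow (reflect y) (reflect x) s (1 - j) (1 - i) = L1pow x y s i j := by
  induction s generalizing i j with
  | zero => simp only [L1pow, sub_right_inj, eq_comm]
  | succ s ih =>
    rw [L1pow_succ_eq_sum_left x y, L1pow]
    refine Finset.sum_nbij' (1 - ·) (1 - ·) ?_ ?_ (by simp) (by simp) fun l _ => ?_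
    · simp only [Finset.mem_Icc]; omega
    · simp only [Finset.mem_Icc]; omega
    · rw [← ih, ← L1e_reflect x y, sub_sub_cancel, mul_comm]

end Reflection

section TailSums

variable {A : Type*} [CommRing A]

/-- The tail sum `T_j = ∑_{l ≥ j} x_l r_l` of a row vector `r`, cut off at an index `M` beyond
which `r` is meant to vanish. -/
def tailSum (x r : ℤ → A) (M j : ℤ) : A := ∑ l ∈ Finset.Icc j M, x l * r l

variable {x r : ℤ → A} {M : ℤ}

theorem tailSum_eq_add_tailSum_succ (hr : ∀ l, M < l → r l = 0) (j : ℤ) :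
    tailSum x r M j = x j * r j + tailSum x r M (j + 1) := by
  by_cases h : j ≤ M
  · rw [tailSum, tailSum, Finset.Icc_add_one_left_eq_Ioc, ← Finset.add_sum_Ioc_eq_sum_Icc h]
  · rw [tailSum, tailSum, Finset.Icc_eq_empty h, Finset.Icc_eq_empty (by omega), hr j (by omega),
      Finset.sum_empty, mul_zero, zero_add]

theorem tailSum_const_mul (w : A) (j : ℤ) :
    tailSum x (fun l => w * r l) M j = w * tailSum x r M j := by
  simp only [tailSum, Finset.mul_sum, mul_left_comm]

theorem sum_mul_L1e (hr : ∀ l, M < l → r l = 0) (y : ℤ → A) (j : ℤ) :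
    ∑ l ∈ Finset.Icc (j - 1) M, r l * L1e x y l j =
      r (j - 1) - y (j - 1) * tailSum x r M (j - 1) := by
  have hterm : ∀ l ∈ Finset.Icc (j - 1) M, r l * L1e x y l j =
      (if j - 1 = l then r l else 0) - y (j - 1) * (x l * r l) := by
    intro l hl
    rw [Finset.mem_Icc] at hl
    have heq : l + 1 = j ↔ j - 1 = l := by omega
    simp only [L1e, if_pos (show j ≤ l + 1 by omega), heq]
    split_ifs <;> ring
  rw [Finset.sum_congr rfl hterm, Finset.sum_sub_distrib, ← Finset.mul_sum, Finset.sum_ite_eq,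
    tailSum]
  congr 1
  simp only [Finset.mem_Icc, le_refl, true_and, ite_eq_left_iff, not_le]
  exact fun h => (hr _ h).symm

theorem sum_L1pow_eq_tailSum_reflect (x y : ℤ → A) (k : ℤ) (s : ℕ) :
    ∑ l ∈ Finset.Icc (k - s) (k + 1), y (l - 1) * L1pow x y s l k =
      tailSum (reflect y) (L1pow (reflect y) (reflect x) s (-k + 1)) (-k + 1 + s) (-k) := by
  rw [tailSum]
  refine Finset.sum_nbij' (1 - ·) (1 - ·) ?_ ?_ (by simp) (by simp) fun l _ => ?_
  · simp only [Finset.mem_Icc]; omega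
  · simp only [Finset.mem_Icc]; omega
  · rw [neg_add_eq_sub, L1pow_reflect, reflect, neg_sub]

end TailSums

section PoleCancellation

variable {A : Type*} [CommRing A]

/-- The only terms `x_n`, `y_n` outside the subring `G` (the "poles") are cancelled by their
neighbours, in the combinations that occur in products of entries of `L₁`. -/
structure PoleCancels (G : Subring A) (n : ℤ) (x y : ℤ → A) : Prop where
  right_mul_mem : y n * (1 - x (n + 1) * y (n + 1)) ∈ G
  left_mul_mem : x n * (1 - x (n - 1) * y (n - 1)) ∈ G
  add_mem : x (n + 1) * y n + x n * y (n - 1) ∈ G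

/-- Row vectors that may leave the subring `G` only at the index `n + 1`, and there only in a way
that the neighbouring pole `x_n` compensates. -/
structure AdmissibleRow (G : Subring A) (n : ℤ) (x y r : ℤ → A) : Prop where
  mem : ∀ l, l ≠ n + 1 → r l ∈ G
  pair_mem : x n * r n + x (n + 1) * r (n + 1) ∈ G
  mul_mem : (1 - x (n + 1) * y (n + 1)) * r (n + 1) ∈ G

variable {G : Subring A} {n : ℤ} {x y r : ℤ → A}

theorem PoleCancels.reflect (h : PoleCancels G n x y) :
    PoleCancels G (-n) (reflect y) (reflect x) where
  right_mul_mem := by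
    simpa only [SingConf.reflect, neg_neg, neg_add', mul_comm] using h.left_mul_mem
  left_mul_mem := by
    simpa only [SingConf.reflect, neg_neg, neg_sub', sub_neg_eq_add, mul_comm]
      using h.right_mul_mem
  add_mem := by
    simpa only [SingConf.reflect, neg_neg, neg_add', neg_sub', sub_neg_eq_add, mul_comm, add_comm]
      using h.add_mem

/-- Here `t` is to be thought of as the local parameter at the pole, and `s` as `t⁻¹`. -/
theorem PoleCancels.of_expansion {s t e q p m : A} (hst : s * t = 1) (he : e * e = 1)
    (ht : t ∈ G) (heG : e ∈ G) (hq : q ∈ G) (hp : p ∈ G) (hm : m ∈ G)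
    (hxn : x n = s * q) (hxp : x (n + 1) = t * p - e) (hxm : x (n - 1) = t * m + e) :
    PoleCancels G n x x where
  right_mul_mem := by
    have hmem : q * p * (2 * e - t * p) ∈ G :=
      G.mul_mem (G.mul_mem hq hp) (G.sub_mem (G.mul_mem (ofNat_mem G 2) heG) (G.mul_mem ht hp))
    rw [hxn, hxp]
    convert hmem using 1
    linear_combination (-s * q) * he + (q * p * (2 * e - t * p)) * hst
  left_mul_mem := by
    have hmem : -(q * m * (2 * e + t * m)) ∈ G := G.neg_mem <|
      G.mul_mem (G.mul_mem hq hm) (G.add_mem (G.mul_mem (ofNat_mem G 2) heG) (G.mul_mem ht hm))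
    rw [hxn, hxm]
    convert hmem using 1
    linear_combination (-s * q) * he - (q * m * (2 * e + t * m)) * hst
  add_mem := by
    rw [hxn, hxp, hxm]
    convert G.mul_mem hq (G.add_mem hp hm) using 1
    linear_combination q * (p + m) * hst

variable {M j : ℤ}

theorem AdmissibleRow.tailSum_mem_of_lt (hr : AdmissibleRow G n x y r)
    (hx : ∀ l ≠ n, x l ∈ G) (hj : n + 1 < j) : tailSum x r M j ∈ G := by
  refine G.sum_mem fun l hl => ?_
  rw [Finset.mem_Icc] at hl
  exact G.mul_mem (hx l (by omega)) (hr.mem l (by omega))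

theorem AdmissibleRow.tailSum_mem_of_le (hr : AdmissibleRow G n x y r)
    (hx : ∀ l ≠ n, x l ∈ G) (hM : ∀ l, M < l → r l = 0) (hj : j ≤ n) :
    tailSum x r M j ∈ G := by
  induction j, hj using Int.leInductionDown with
  | base =>
    rw [tailSum_eq_add_tailSum_succ hM, tailSum_eq_add_tailSum_succ hM, ← add_assoc]
    exact G.add_mem hr.pair_mem (hr.tailSum_mem_of_lt hx (by omega))
  | pred j hj ih =>
    rw [tailSum_eq_add_tailSum_succ hM, sub_add_cancel]
    exact G.add_mem (G.mul_mem (hx _ (by omega)) (hr.mem _ (by omega))) ih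

theorem AdmissibleRow.tailSum_mem (hr : AdmissibleRow G n x y r)
    (hx : ∀ l ≠ n, x l ∈ G) (hM : ∀ l, M < l → r l = 0) (hj : j ≠ n + 1) :
    tailSum x r M j ∈ G := by
  rcases lt_or_gt_of_ne hj with hlt | hgt
  · exact hr.tailSum_mem_of_le hx hM (by omega)
  · exact hr.tailSum_mem_of_lt hx hgt

theorem AdmissibleRow.mul_tailSum_mem (hr : AdmissibleRow G n x y r) (hx : ∀ l ≠ n, x l ∈ G)
    (hy : ∀ l ≠ n, y l ∈ G) (hM : ∀ l, M < l → r l = 0) (hj : j ≠ n) :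
    (1 - x j * y j) * tailSum x r M j ∈ G := by
  have hv : 1 - x j * y j ∈ G := G.sub_mem G.one_mem (G.mul_mem (hx j hj) (hy j hj))
  by_cases hjn : j = n + 1
  · have hhead : x j * ((1 - x j * y j) * r j) ∈ G :=
      G.mul_mem (hx j hj) (by simpa only [hjn] using hr.mul_mem)
    have htail : (1 - x j * y j) * tailSum x r M (j + 1) ∈ G :=
      G.mul_mem hv (hr.tailSum_mem_of_lt hx (by omega))
    rw [tailSum_eq_add_tailSum_succ hM]
    convert G.add_mem hhead htail using 1
    ring
  · exact G.mul_mem hv (hr.tailSum_mem hx hM hjn)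

theorem AdmissibleRow.mul_L1e (hr : AdmissibleRow G n x y r) (hx : ∀ l ≠ n, x l ∈ G)
    (hy : ∀ l ≠ n, y l ∈ G) (hpole : PoleCancels G n x y) (hM : ∀ l, M < l → r l = 0) :
    AdmissibleRow G n x y fun j => ∑ l ∈ Finset.Icc (j - 1) M, r l * L1e x y l j := by
  have hTn : tailSum x r M n ∈ G := hr.tailSum_mem hx hM (by omega)
  have hrn : r n ∈ G := hr.mem n (by omega)
  have hxp : x (n + 1) ∈ G := hx _ (by omega)
  have hyp : y (n + 1) ∈ G := hy _ (by omega)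
  simp only [sum_mul_L1e hM]
  refine ⟨fun j hj => ?_, ?_, ?_⟩
  · by_cases hjn : j - 1 = n + 1
    · have htail : y (n + 1) * tailSum x r M (n + 1 + 1) ∈ G :=
        G.mul_mem hyp (hr.tailSum_mem_of_lt hx (by omega))
      rw [hjn, tailSum_eq_add_tailSum_succ hM]
      convert G.sub_mem hr.mul_mem htail using 1
      ring
    · exact G.sub_mem (hr.mem _ hjn) (G.mul_mem (hy _ (by omega)) (hr.tailSum_mem hx hM hjn))
  · have hTpred := tailSum_eq_add_tailSum_succ (x := x) hM (n - 1)
    rw [sub_add_cancel] at hTpred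
    rw [add_sub_cancel_right, hTpred]
    convert G.add_mem (G.sub_mem (G.mul_mem hxp hrn) (G.mul_mem hpole.add_mem hTn))
      (G.mul_mem hpole.left_mul_mem (hr.mem (n - 1) (by omega))) using 1
    ring
  · rw [add_sub_cancel_right]
    convert G.sub_mem (G.mul_mem (G.sub_mem G.one_mem (G.mul_mem hxp hyp)) hrn)
      (G.mul_mem hpole.right_mul_mem hTn) using 1
    ring

theorem admissibleRow_mul_L1pow (hx : ∀ l ≠ n, x l ∈ G) (hy : ∀ l ≠ n, y l ∈ G)
    (hpole : PoleCancels G n x y) {w : A} (hw : w ∈ G) {i : ℤ} (hi : i ≠ n + 1)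
    (hwn : i = n → x n * w ∈ G) (s : ℕ) :
    AdmissibleRow G n x y fun l => w * L1pow x y s i l := by
  induction s with
  | zero =>
    refine ⟨fun l _ => ?_, ?_, ?_⟩
    · simp only [L1pow, mul_ite, mul_one, mul_zero]
      split_ifs <;> simp [hw]
    · by_cases h : i = n
      · simpa [L1pow, h] using hwn h
      · simp [L1pow, hi, h]
    · simp [L1pow, hi]
  | succ s ih =>
    have hM : ∀ l, i + s < l → w * L1pow x y s i l = 0 := fun l hl => by
      rw [L1pow_eq_zero_of_lt x y hl, mul_zero]
    simpa only [L1pow, Finset.mul_sum, mul_assoc] using ih.mul_L1e hx hy hpole hM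

theorem mul_tailSum_L1pow_mem (hx : ∀ l ≠ n, x l ∈ G) (hy : ∀ l ≠ n, y l ∈ G)
    (hpole : PoleCancels G n x y) {k : ℤ} (hk : k ≠ n) (s : ℕ) :
    (1 - x k * y k) * tailSum x (L1pow x y s (k + 1)) (k + 1 + s) k ∈ G := by
  by_cases hkn : k = n - 1
  -- The row starts at the index of the pole, so the factor `v_k` must be there from the start.
  · have hrow := admissibleRow_mul_L1pow hx hy hpole (w := 1 - x k * y k)
      (G.sub_mem G.one_mem (G.mul_mem (hx k hk) (hy k hk))) (i := k + 1) (by omega)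
      (fun _ => by simpa only [hkn] using hpole.left_mul_mem) s
    rw [← tailSum_const_mul]
    exact hrow.tailSum_mem hx
      (fun l hl => by rw [L1pow_eq_zero_of_lt x y hl, mul_zero]) (by omega)
  · have hrow := admissibleRow_mul_L1pow hx hy hpole G.one_mem (i := k + 1) (by omega)
      (fun h => absurd h (by omega)) s
    simp only [one_mul] at hrow
    exact hrow.mul_tailSum_mem hx hy (fun l hl => L1pow_eq_zero_of_lt x y hl) hk

end PoleCancellation

section RecursionPolynomial

variable {A : Type*} [CommRing A] {G : Subring A} {n k : ℤ} {N : ℕ} {u : ℕ → A} {x : ℤ → A}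

theorem GamSD_eq_sum_tailSum (N : ℕ) (u : ℕ → A) (x : ℤ → A) (k : ℤ) :
    GamSD N u x k = (∑ i ∈ Finset.Icc 1 N, u i *
      ((1 - x k * x k) * tailSum x (L1pow x x (i - 1) (k + 1)) (k + 1 + (i - 1 : ℕ)) k +
        (1 - reflect x (-k) * reflect x (-k)) *
          tailSum (reflect x) (L1pow (reflect x) (reflect x) (i - 1) (-k + 1))
            (-k + 1 + (i - 1 : ℕ)) (-k))) + k * x k := by
  rw [GamSD, Finset.mul_sum]
  congr 1
  refine Finset.sum_congr rfl fun i hi => ?_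
  rw [Finset.mem_Icc] at hi
  have hupper : k + (i : ℤ) = k + 1 + (i - 1 : ℕ) := by omega
  have hlower : k - (i : ℤ) + 1 = k - (i - 1 : ℕ) := by omega
  rw [hupper, hlower, sum_L1pow_eq_tailSum_reflect, ← tailSum, reflect, neg_neg]
  ring

theorem GamSD_congr {x' : ℤ → A} (h : ∀ j ∈ Set.Icc (k - N) (k + N), x j = x' j) :
    GamSD N u x k = GamSD N u x' k := by
  simp only [Set.mem_Icc] at h
  rw [GamSD, GamSD, h k (by omega)]
  congr 2
  refine Finset.sum_congr rfl fun i hi => ?_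
  rw [Finset.mem_Icc] at hi
  congr 2 <;> refine Finset.sum_congr rfl fun l hl => ?_ <;> rw [Finset.mem_Icc] at hl
  · rw [h l (by omega), L1pow_congr] <;> exact fun m _ _ => h m (by omega)
  · rw [h (l - 1) (by omega), L1pow_congr] <;> exact fun m _ _ => h m (by omega)

theorem GamSD_mem (hu : ∀ i ∈ Finset.Icc 1 N, u i ∈ G) (hx : ∀ l ≠ n, x l ∈ G)
    (hpole : PoleCancels G n x x) (hk : k ≠ n) : GamSD N u x k ∈ G := by
  have hxr : ∀ l ≠ -n, reflect x l ∈ G := fun l hl => hx (-l) (by omega)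
  rw [GamSD_eq_sum_tailSum]
  exact G.add_mem
    (G.sum_mem fun i hi => G.mul_mem (hu i hi) <| G.add_mem
      (mul_tailSum_L1pow_mem hx hx hpole hk _)
      (mul_tailSum_L1pow_mem hxr hxr hpole.reflect (by omega) _))
    (G.mul_mem (intCast_mem G k) (hx k hk))

theorem GamSD_mem_of_window (hu : ∀ i ∈ Finset.Icc 1 N, u i ∈ G)
    (hx : ∀ j ∈ Set.Icc (k - N) (k + N) ∪ Set.Icc (n - 1) (n + 1), j ≠ n → x j ∈ G)
    (hpole : PoleCancels G n x x) (hk : k ≠ n) : GamSD N u x k ∈ G := by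
  set S : Set ℤ := Set.Icc (k - N) (k + N) ∪ Set.Icc (n - 1) (n + 1)
  have hnear : ∀ j, n - 1 ≤ j → j ≤ n + 1 → S.indicator x j = x j := fun j h₁ h₂ =>
    Set.indicator_of_mem (show j ∈ S from Or.inr ⟨h₁, h₂⟩) x
  rw [GamSD_congr (x' := S.indicator x) fun j hj =>
    (Set.indicator_of_mem (show j ∈ S from Or.inl hj) x).symm]
  refine GamSD_mem hu (fun l hl => ?_) ⟨?_, ?_, ?_⟩ hk
  · by_cases h : l ∈ S
    · rw [Set.indicator_of_mem h]
      exact hx l h hl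
    · rw [Set.indicator_of_notMem h]
      exact G.zero_mem
  · rw [hnear n (by omega) (by omega), hnear (n + 1) (by omega) (by omega)]
    exact hpole.right_mul_mem
  · rw [hnear n (by omega) (by omega), hnear (n - 1) (by omega) (by omega)]
    exact hpole.left_mul_mem
  · rw [hnear n (by omega) (by omega), hnear (n + 1) (by omega) (by omega),
      hnear (n - 1) (by omega) (by omega)]
    exact hpole.add_mem

end RecursionPolynomial

section RegularSeries

variable {K : Type*} [CommRing K] {R : Subring K} {f : LaurentSeries K}

/-- The ring of formal Laurent series without pole whose constant term lies in the subring `R`. -/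
def regularSeries (R : Subring K) : Subring (LaurentSeries K) :=
  (R.comap PowerSeries.constantCoeff).map (HahnSeries.ofPowerSeries ℤ K)

theorem mem_regularSeries :
    f ∈ regularSeries R ↔ (∀ i < 0, f.coeff i = 0) ∧ f.coeff 0 ∈ R := by
  constructor
  · rintro ⟨p, hp, rfl⟩
    refine ⟨fun i hi => ?_, ?_⟩
    · rw [PowerSeries.coeff_coe, if_pos hi]
    · simpa [PowerSeries.coeff_coe] using hp
  · rintro ⟨hneg, hzero⟩
    refine ⟨PowerSeries.mk fun m => f.coeff (m : ℤ), by simpa using hzero, ?_⟩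
    ext i
    rw [PowerSeries.coeff_coe]
    split_ifs with hi
    · exact (hneg i hi).symm
    · rw [PowerSeries.coeff_mk, Int.natAbs_of_nonneg (not_lt.1 hi)]

theorem C_mem_regularSeries {c : K} (hc : c ∈ R) : HahnSeries.C c ∈ regularSeries R :=
  mem_regularSeries.2 ⟨fun i hi => HahnSeries.coeff_single_of_ne hi.ne, by simpa using hc⟩

theorem single_one_mem_regularSeries (c : K) : HahnSeries.single (1 : ℤ) c ∈ regularSeries R :=
  mem_regularSeries.2 ⟨fun i hi => HahnSeries.coeff_single_of_ne (by omega), by simp⟩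

theorem exists_mem_regularSeries_eq_single_mul {m : ℤ} (hlt : ∀ i < m, f.coeff i = 0)
    (hm : f.coeff m ∈ R) : ∃ g ∈ regularSeries R, f = HahnSeries.single m 1 * g := by
  refine ⟨HahnSeries.single (-m) 1 * f, mem_regularSeries.2 ⟨fun i hi => ?_, ?_⟩, ?_⟩
  · rw [HahnSeries.coeff_single_mul, one_mul, hlt _ (by omega)]
  · rwa [HahnSeries.coeff_single_mul, one_mul, sub_neg_eq_add, zero_add]
  · rw [← mul_assoc, HahnSeries.single_mul_single, add_neg_cancel, one_mul,
      HahnSeries.single_zero_one, one_mul]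

end RegularSeries

section PoleExpansion

variable {K : Type*} [Field K]

/-- The prescribed leading terms of a family of Laurent series with a single pole, at `x_n`. The
residue `-ε/2` is prescribed without division, so that `ε ≠ 0` rules out characteristic two. -/
structure HasPoleExpansion (n : ℤ) (ε aplus aminus : K) (a : ℤ → K)
    (x : ℤ → LaurentSeries K) : Prop where
  regular : ∀ k, k ≠ n → BigO (x k) 0
  simple_pole : BigO (x n) (-1)
  two_mul_residue : 2 * (x n).coeff (-1) = -ε
  coeff_zero_succ : (x (n + 1)).coeff 0 = -ε
  coeff_zero_pred : (x (n - 1)).coeff 0 = ε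
  coeff_one_succ : (x (n + 1)).coeff 1 = 4 * ε * aplus
  coeff_one_pred : (x (n - 1)).coeff 1 = 4 * ε * aminus
  coeff_zero : ∀ k, 2 ≤ |k - n| → (x k).coeff 0 = ε * a k

variable {n : ℤ} {ε aplus aminus : K} {a : ℤ → K} {x : ℤ → LaurentSeries K}

theorem HasPoleExpansion.residue_mem (hx : HasPoleExpansion n ε aplus aminus a x) (hε : ε ≠ 0)
    {F : Subfield K} (hεF : ε ∈ F) : (x n).coeff (-1) ∈ F := by
  have htwo : (2 : K) ≠ 0 := fun h => hε <| by
    simpa only [h, zero_mul, zero_eq_neg] using hx.two_mul_residue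
  rw [eq_div_of_mul_eq htwo ((mul_comm _ _).trans hx.two_mul_residue)]
  exact F.div_mem (F.neg_mem hεF) (ofNat_mem F 2)

theorem HasPoleExpansion.poleCancels (hx : HasPoleExpansion n ε aplus aminus a x)
    (hε : ε * ε = 1) {R : Subring K} (hεR : ε ∈ R) (hres : (x n).coeff (-1) ∈ R)
    (hplus : aplus ∈ R) (hminus : aminus ∈ R) : PoleCancels (regularSeries R) n x x := by
  have hfour : 4 * ε ∈ R := R.mul_mem (ofNat_mem R 4) hεR
  have hsucc_lt : ∀ i < 1, (x (n + 1) + HahnSeries.C ε).coeff i = 0 := fun i hi => by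
    rcases (show i ≤ 0 by omega).eq_or_lt with rfl | hneg
    · simp [hx.coeff_zero_succ]
    · simp [hx.regular (n + 1) (by omega) i hneg, HahnSeries.coeff_single_of_ne hneg.ne]
  have hpred_lt : ∀ i < 1, (x (n - 1) - HahnSeries.C ε).coeff i = 0 := fun i hi => by
    rcases (show i ≤ 0 by omega).eq_or_lt with rfl | hneg
    · simp [hx.coeff_zero_pred]
    · simp [hx.regular (n - 1) (by omega) i hneg, HahnSeries.coeff_single_of_ne hneg.ne]
  obtain ⟨q, hq, hxn⟩ := exists_mem_regularSeries_eq_single_mul hx.simple_pole hres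
  obtain ⟨p, hp, hxp⟩ := exists_mem_regularSeries_eq_single_mul (R := R) hsucc_lt
    (by simpa [hx.coeff_one_succ] using R.mul_mem hfour hplus)
  obtain ⟨m, hm, hxm⟩ := exists_mem_regularSeries_eq_single_mul (R := R) hpred_lt
    (by simpa [hx.coeff_one_pred] using R.mul_mem hfour hminus)
  exact .of_expansion (by simp [HahnSeries.single_mul_single])
    (by rw [← map_mul, hε, map_one]) (single_one_mem_regularSeries 1) (C_mem_regularSeries hεR)
    hq hp hm hxn (eq_sub_of_add_eq hxp) (eq_add_of_sub_eq hxm)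

theorem HasPoleExpansion.mem_regularSeries (hx : HasPoleExpansion n ε aplus aminus a x)
    {R : Subring K} (hεR : ε ∈ R) {j : ℤ} (hj : j ≠ n) (ha : 2 ≤ |j - n| → a j ∈ R) :
    x j ∈ regularSeries R := by
  refine SingConf.mem_regularSeries.2 ⟨hx.regular j hj, ?_⟩
  by_cases hfar : 2 ≤ |j - n|
  · rw [hx.coeff_zero j hfar]
    exact R.mul_mem hεR (ha hfar)
  · obtain rfl | rfl : j = n + 1 ∨ j = n - 1 := by
      rw [le_abs] at hfar
      omega
    · rw [hx.coeff_zero_succ]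
      exact R.neg_mem hεR
    · rwa [hx.coeff_zero_pred]

theorem IsTheSDSol.hasPoleExpansion {N : ℕ} {ε : KSD n N} {x : ℤ → LaurentSeries (KSD n N)}
    (hx : IsTheSDSol n N ε x) :
    HasPoleExpansion n ε (apSD n N) (amSD n N) (avSD n N) x := by
  obtain ⟨-, hreg, hpole, hres, hp0, hm0, hp1, hm1, hoff⟩ := hx
  exact ⟨hreg, hpole, by rw [hres, mul_div_cancel₀ _ two_ne_zero], hp0, hm0, hp1, hm1, hoff⟩

theorem bigO_utSD (n : ℤ) (N i : ℕ) : BigO (utSD n N i) 0 := fun m hm => by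
  rw [utSD]
  split_ifs <;> simp [HahnSeries.coeff_single_of_ne, hm.ne, show m ≠ 1 by omega]

theorem coeff_zero_utSD (n : ℤ) (N i : ℕ) : (utSD n N i).coeff 0 = uvSD n N i := by
  rw [utSD]
  split_ifs <;> simp

end PoleExpansion

end SingConf

theorem statement9_general {K : Type*} [Field K] {n : ℤ} {N : ℕ} {ε aplus aminus : K} {a : ℤ → K}
    {x : ℤ → LaurentSeries K} {u : ℕ → LaurentSeries K} (hε : ε = 1 ∨ ε = -1)
    (hx : HasPoleExpansion n ε aplus aminus a x) (hu : ∀ i ∈ Finset.Icc 1 N, BigO (u i) 0)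
    {k : ℤ} (hk : k ≠ n) :
    (GamSD N u x k).coeff 0 ∈
      Subring.closure
        ((Subfield.closure {c : K | ∃ i : ℕ, 1 ≤ i ∧ i ≤ N ∧ c = (u i).coeff 0} : Subfield K) ∪
          {c : K | ∃ i : ℤ, k - N ≤ i ∧ i ≤ k + N ∧ 2 ≤ |i - n| ∧ c = a i} ∪
          {aplus, aminus}) := by
  set F : Subfield K := Subfield.closure {c : K | ∃ i : ℕ, 1 ≤ i ∧ i ≤ N ∧ c = (u i).coeff 0}
  set R : Subring K := Subring.closure ((F : Set K) ∪
    {c : K | ∃ i : ℤ, k - N ≤ i ∧ i ≤ k + N ∧ 2 ≤ |i - n| ∧ c = a i} ∪ {aplus, aminus})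
  have hFR : ∀ c ∈ F, c ∈ R := fun c hc => Subring.subset_closure (Or.inl (Or.inl hc))
  have hεF : ε ∈ F := by rcases hε with rfl | rfl <;> simp
  have hεε : ε * ε = 1 := by rcases hε with rfl | rfl <;> simp
  have hpole : PoleCancels (regularSeries R) n x x :=
    hx.poleCancels hεε (hFR ε hεF) (hFR _ (hx.residue_mem (left_ne_zero_of_mul_eq_one hεε) hεF))
      (Subring.subset_closure (Or.inr (Or.inl rfl)))
      (Subring.subset_closure (Or.inr (Or.inr rfl)))
  have huR : ∀ i ∈ Finset.Icc 1 N, u i ∈ regularSeries R := fun i hi =>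
    mem_regularSeries.2 ⟨hu i hi, hFR _ <| Subfield.subset_closure
      ⟨i, (Finset.mem_Icc.1 hi).1, (Finset.mem_Icc.1 hi).2, rfl⟩⟩
  refine (mem_regularSeries.1 (GamSD_mem_of_window huR (fun j hj hjn => ?_) hpole hk)).2
  refine hx.mem_regularSeries (hFR ε hεF) hjn fun hfar => ?_
  obtain ⟨hlo, hhi⟩ : k - N ≤ j ∧ j ≤ k + N := by
    simp only [Set.mem_union, Set.mem_Icc] at hj
    rw [le_abs] at hfar
    omega
  exact Subring.subset_closure (Or.inl (Or.inr ⟨j, hlo, hhi, hfar, rfl⟩))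

/-- For every `k ≠ n`, the constant term `Γ_k^{(0)}` of
`Γ_k(t) = Γ_k(x(t); u(t))` lies in the subring of `K = KSD n N` generated over
`ℚ(u_1, …, u_N)` by `a_{k-N}, …, a_{k+N}, a₊, a₋` (with the conventions `a_{n±1} = ∓1`,
`a_n` absent). -/
theorem statement9 (n : ℤ) (N : ℕ) (hN : 1 ≤ N)
    (ε : KSD n N) (hε : ε = 1 ∨ ε = -1)
    (x : ℤ → LaurentSeries (KSD n N)) (hx : IsTheSDSol n N ε x) :
    ∀ k : ℤ, k ≠ n →
      (GamSD N (utSD n N) x k).coeff 0 ∈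
        Subring.closure
          ((Subfield.closure {c : KSD n N | ∃ i : ℕ, 1 ≤ i ∧ i ≤ N ∧ c = uvSD n N i} :
              Subfield (KSD n N)) ∪
            {c : KSD n N | ∃ i : ℤ, k - N ≤ i ∧ i ≤ k + N ∧ c = avSD n N i} ∪
            {apSD n N, amSD n N}) := by
  intro k hk
  have hmem := statement9_general (N := N) hε hx.hasPoleExpansion (fun i _ => bigO_utSD n N i) hk
  simp only [coeff_zero_utSD] at hmem
  exact Subring.closure_mono (by gcongr; exact And.right) hmem
end
end
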